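/- There exist δ₀ > 0 and c > 0 such that for every δ ∈ (0, δ₀), every smooth ψ : ℝ → [0,1] with ψ(x) = 0 for x ≤ 1 and ψ(x) = 1 for x ≥ √2, and every sufficiently large X (in terms of δ and ψ), one has M(z, y) ≥ c / log X. -/

import Mathlib

open scoped Classical

/-- Generic (β-)sieve weight: for squarefree `d = p₁⋯p_r` with primes
`lo ≤ p_r < ⋯ < p₁ < hi` satisfying `p₁⋯p_m·p_m^β < lvl` for all `m ≤ r` of the
prescribed parity (odd if `useOdd`, even otherwise), the weight is `μ(d)`;
otherwise it is `0` (and `1` gets weight `μ(1) = 1`). With `β = 2` these are the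
linear sieve weights `λ^±`, with `β = 30` the β-sieve weights `ρ^±`. -/
noncomputable def sieveWeight (lo hi lvl : ℝ) (β : ℕ) (useOdd : Bool) (d : ℕ) : ℝ :=
  if Squarefree d ∧ (∀ p ∈ d.primeFactors, lo ≤ (p : ℝ) ∧ (p : ℝ) < hi) ∧
      (∀ m : ℕ, 1 ≤ m → m ≤ d.primeFactorsList.length →
        (if useOdd then Odd m else Even m) →
        (((d.primeFactorsList.reverse.take m).prod : ℕ) : ℝ) *
          ((d.primeFactorsList.reverse.getD (m - 1) 1 : ℕ) : ℝ) ^ β < lvl)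
  then (ArithmeticFunction.moebius d : ℝ) else 0

/-- `(k, P(lo,hi))`: the product of the distinct primes `p ∣ k` with `lo ≤ p < hi`. -/
noncomputable def gcdPart (lo hi : ℝ) (k : ℕ) : ℕ :=
  ∏ p ∈ k.primeFactors.filter (fun p : ℕ => lo ≤ (p : ℝ) ∧ (p : ℝ) < hi), p

/-- `k ∣ P(z)`: `k` is squarefree with all prime factors `< z`. -/
def dividesPrimorial (z : ℝ) (k : ℕ) : Prop :=
  Squarefree k ∧ ∀ p ∈ k.primeFactors, (p : ℝ) < z

/-- The lower-bound vector-sieve weight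
`α_k⁻ = 1_{k ∣ P(z)}(λ⁺_{(k,P(w,z))}ρ⁻_{(k,P(w))} + λ⁻_{(k,P(w,z))}ρ⁺_{(k,P(w))}
  − λ⁺_{(k,P(w,z))}ρ⁺_{(k,P(w))})`. -/
noncomputable def alphaMinus (w z D E : ℝ) (k : ℕ) : ℝ :=
  (if dividesPrimorial z k then 1 else 0) *
    (sieveWeight w z D 2 true (gcdPart w z k) * sieveWeight 0 w E 30 false (gcdPart 0 w k)
      + sieveWeight w z D 2 false (gcdPart w z k) * sieveWeight 0 w E 30 true (gcdPart 0 w k)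
      - sieveWeight w z D 2 true (gcdPart w z k) * sieveWeight 0 w E 30 true (gcdPart 0 w k))

/-- The upper-bound sieve weight `α_{k,a}⁺ = 1_{k ∣ P(z)}·λ⁺_{(k,P(w,z)), level Da}·ρ⁺_{(k,P(w))}`. -/
noncomputable def alphaPlusLevel (w z Da E : ℝ) (k : ℕ) : ℝ :=
  (if dividesPrimorial z k then 1 else 0) *
    sieveWeight w z Da 2 true (gcdPart w z k) * sieveWeight 0 w E 30 true (gcdPart 0 w k)

/-- The main term
`M(z,y) = Σ_{d ∣ P(z)} α_d⁻/d − Σ_{a ∈ 𝓘} Σ_p σ(p/(√2)^a)(1 − log p/ log y)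
  Σ_{d ∣ P(z)} α_{d,a}⁺/(dp)`, where `σ(x) = ψ(x) − ψ(x/√2)`,
`𝓘 = [⌊log z/log √2⌋ − 2, ⌊log y/log √2⌋] ∩ ℕ` and `D_a = D/(√2)^{a+2}`. -/
noncomputable def richertMainTerm (w z y D E : ℝ) (ψ : ℝ → ℝ) : ℝ :=
  (∑' d : ℕ, alphaMinus w z D E d / d) -
    ∑ a ∈ Finset.Icc (⌊Real.log z / Real.log (Real.sqrt 2)⌋₊ - 2)
        ⌊Real.log y / Real.log (Real.sqrt 2)⌋₊,
      ∑' p : ℕ, if p.Prime then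
          (ψ ((p : ℝ) / Real.sqrt 2 ^ a) - ψ ((p : ℝ) / Real.sqrt 2 ^ a / Real.sqrt 2)) *
            (1 - Real.log p / Real.log y) *
            ∑' d : ℕ, alphaPlusLevel w z (D / Real.sqrt 2 ^ (a + 2)) E d / ((d : ℝ) * p)
        else 0


/-- logarithm of a factorial as a sum over primes -/
lemma rs_log_factorial (n : ℕ) :
    Real.log (n.factorial : ℝ) = ∑ k ∈ (Finset.range (n + 1)).filter Nat.Prime,
      (n.factorial.factorization k : ℝ) * Real.log k := by
  rw [Real.log_nat_eq_sum_factorization]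
  apply Finsupp.sum_of_support_subset
  · intro p hp
    rw [Nat.support_factorization, Nat.mem_primeFactors] at hp
    rw [Finset.mem_filter, Finset.mem_range]
    refine ⟨?_, hp.1⟩
    have := (hp.1.dvd_factorial).1 hp.2.1
    omega
  · intro i _
    simp

lemma rs_fact_lower {p n : ℕ} (hp : p.Prime) :
    (n : ℝ) / p - 1 ≤ (n.factorial.factorization p : ℝ) := by
  rcases Nat.lt_or_ge n p with h | h
  · have : (n : ℝ) / p < 1 := by
      rw [div_lt_one (by exact_mod_cast hp.pos)]; exact_mod_cast h
    have h2 : (0 : ℝ) ≤ (n.factorial.factorization p : ℝ) := by positivity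
    linarith
  · rw [Nat.factorization_factorial hp (Nat.lt_succ_self _)]
    have h1 : n / p ^ 1 ≤ ∑ i ∈ Finset.Ico 1 (Nat.log p n).succ, n / p ^ i := by
      apply Finset.single_le_sum (f := fun i => n / p ^ i) (fun i _ => Nat.zero_le _)
      rw [Finset.mem_Ico]
      have := Nat.log_pos hp.one_lt h
      omega
    have h2 : (n : ℝ) / p - 1 ≤ ((n / p : ℕ) : ℝ) := by
      rw [← Nat.floor_div_eq_div (K := ℝ)]
      have := Nat.lt_floor_add_one ((n : ℝ) / p)
      linarith
    rw [pow_one] at h1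
    have h3 : ((n / p : ℕ) : ℝ) ≤ ((∑ i ∈ Finset.Ico 1 (Nat.log p n).succ, n / p ^ i : ℕ) : ℝ) := by
      exact_mod_cast h1
    linarith

lemma rs_fact_upper {p n : ℕ} (hp : p.Prime) :
    (n.factorial.factorization p : ℝ) ≤ (n : ℝ) / (p - 1) := by
  have : Fact p.Prime := ⟨hp⟩
  have h := sub_one_mul_padicValNat_factorial (p := p) n
  have h2 : (p - 1) * n.factorial.factorization p ≤ n := by
    rw [Nat.factorization_def _ hp, h]; exact Nat.sub_le _ _
  have h3 : (((p - 1 : ℕ) : ℝ)) * (n.factorial.factorization p : ℝ) ≤ n := by exact_mod_cast h2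
  rw [Nat.cast_sub hp.one_lt.le, Nat.cast_one] at h3
  have h4 : (1 : ℝ) < p := by exact_mod_cast hp.one_lt
  rw [le_div_iff₀ (by linarith)]
  linarith

noncomputable def rsC1 (k : ℕ) : ℝ := if k.Prime then Real.log k / k else 0

lemma rs_mertens_upper (n : ℕ) (hn : 1 ≤ n) :
    ∑ k ∈ Finset.range (n + 1), rsC1 k ≤ Real.log n + Real.log 4 := by
  have hn' : (0 : ℝ) < n := by exact_mod_cast hn
  have h1 : Real.log (n.factorial : ℝ) ≤ n * Real.log n := by
    rw [← Real.log_pow]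
    apply Real.log_le_log (by positivity)
    exact_mod_cast Nat.factorial_le_pow n
  rw [rs_log_factorial] at h1
  have h2 := Chebyshev.theta_le_log4_mul_x hn'.le
  rw [Chebyshev.theta_eq_sum_Icc, Nat.floor_natCast] at h2
  have h3 : Finset.Icc 0 n = Finset.range (n + 1) := by
    ext x; simp only [Finset.mem_Icc, Finset.mem_range]; omega
  rw [h3] at h2
  have h4 : ∑ k ∈ Finset.range (n + 1) with Nat.Prime k, ((n : ℝ) / k - 1) * Real.log k ≤
      n * Real.log n := by
    refine le_trans (Finset.sum_le_sum ?_) h1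
    intro k hk
    rw [Finset.mem_filter] at hk
    exact mul_le_mul_of_nonneg_right (rs_fact_lower hk.2)
      (Real.log_nonneg (by exact_mod_cast hk.2.one_lt.le))
  have h5 : ∑ k ∈ Finset.range (n + 1) with Nat.Prime k, ((n : ℝ) / k - 1) * Real.log k
      = n * ∑ k ∈ Finset.range (n + 1), rsC1 k -
        ∑ k ∈ Finset.range (n + 1) with Nat.Prime k, Real.log k := by
    unfold rsC1
    rw [← Finset.sum_filter, Finset.mul_sum, ← Finset.sum_sub_distrib]
    apply Finset.sum_congr rfl
    intro k _
    ring
  rw [h5] at h4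
  have h6 : (n : ℝ) * ∑ k ∈ Finset.range (n + 1), rsC1 k ≤ n * (Real.log n + Real.log 4) := by
    nlinarith
  exact le_of_mul_le_mul_left h6 hn'

lemma rs_extra : ∃ C : ℝ, 0 ≤ C ∧ ∀ n : ℕ, ∑ k ∈ Finset.range (n + 1) with Nat.Prime k,
    Real.log k / (k * ((k : ℝ) - 1)) ≤ C := by
  have hs : Summable (fun k : ℕ => 4 * (1 / (k : ℝ) ^ (3 / 2 : ℝ))) :=
    (Real.summable_one_div_nat_rpow.2 (by norm_num)).mul_left 4
  refine ⟨∑' k : ℕ, 4 * (1 / (k : ℝ) ^ (3 / 2 : ℝ)), tsum_nonneg (fun k => by positivity), ?_⟩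
  intro n
  refine le_trans (Finset.sum_le_sum ?_) (hs.sum_le_tsum ((Finset.range (n + 1)).filter Nat.Prime)
    (fun k _ => by positivity))
  intro k hk
  rw [Finset.mem_filter] at hk
  have h2 : (2 : ℝ) ≤ k := by exact_mod_cast hk.2.two_le
  have hl := Real.log_le_rpow_div (x := k) (ε := 1 / 2) (by linarith) (by norm_num)
  have h3 : (k : ℝ) ^ (1 / 2 : ℝ) * (k : ℝ) ^ (3 / 2 : ℝ) = k ^ 2 := by
    rw [← Real.rpow_add (by linarith)]; norm_num
  have hp1 : 0 < (k : ℝ) ^ (1 / 2 : ℝ) := by positivity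
  have hp2 : 0 < (k : ℝ) ^ (3 / 2 : ℝ) := by positivity
  rw [mul_one_div, div_le_div_iff₀ (by nlinarith) hp2]
  have : Real.log k * (k : ℝ) ^ (3 / 2 : ℝ) ≤ 2 * k ^ 2 := by
    rw [← h3]
    have : Real.log k ≤ 2 * (k : ℝ) ^ (1 / 2 : ℝ) := by linarith
    nlinarith
  nlinarith

lemma rs_mertens_lower : ∃ C : ℝ, 0 ≤ C ∧ ∀ n : ℕ, 1 ≤ n →
    Real.log n - C ≤ ∑ k ∈ Finset.range (n + 1), rsC1 k := by
  obtain ⟨C, hC, h⟩ := rs_extra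
  refine ⟨C + 1, by linarith, ?_⟩
  intro n hn
  have hn' : (0 : ℝ) < n := by exact_mod_cast hn
  have hln : 0 ≤ Real.log n := Real.log_nonneg (by exact_mod_cast hn)
  have h1 := Stirling.le_log_factorial_stirling (n := n) (by omega)
  have hpi : 0 ≤ Real.log (2 * Real.pi) := Real.log_nonneg (by linarith [Real.pi_gt_three])
  rw [rs_log_factorial] at h1
  have h4 : ∑ k ∈ (Finset.range (n + 1)).filter Nat.Prime,
      (n.factorial.factorization k : ℝ) * Real.log k ≤
      ∑ k ∈ Finset.range (n + 1) with Nat.Prime k, ((n : ℝ) / (k - 1)) * Real.log k := by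
    refine (Finset.sum_le_sum ?_)
    intro k hk
    rw [Finset.mem_filter] at hk
    exact mul_le_mul_of_nonneg_right (rs_fact_upper hk.2)
      (Real.log_nonneg (by exact_mod_cast hk.2.one_lt.le))
  have h5 : ∑ k ∈ Finset.range (n + 1) with Nat.Prime k, ((n : ℝ) / (k - 1)) * Real.log k
      = n * (∑ k ∈ Finset.range (n + 1), rsC1 k +
        ∑ k ∈ Finset.range (n + 1) with Nat.Prime k, Real.log k / (k * ((k : ℝ) - 1))) := by
    unfold rsC1
    rw [← Finset.sum_filter, ← Finset.sum_add_distrib, Finset.mul_sum]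
    apply Finset.sum_congr rfl
    intro k hk
    rw [Finset.mem_filter] at hk
    have h2 : (2 : ℝ) ≤ k := by exact_mod_cast hk.2.two_le
    have h3 : (k : ℝ) - 1 ≠ 0 := by linarith
    field_simp
    ring
  rw [h5] at h4
  have h6 : (n : ℝ) * (Real.log n - 1) ≤ n * (∑ k ∈ Finset.range (n + 1), rsC1 k + C) := by
    have := h n
    nlinarith
  have := le_of_mul_le_mul_left h6 hn'
  linarith

/-- Mertens' first theorem, in the form used for partial summation -/
lemma rs_mertens1 : ∃ C : ℝ, 0 ≤ C ∧ ∀ m n : ℕ, 2 ≤ m → m ≤ n →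
    |∑ k ∈ Finset.Ico m n, rsC1 k - (Real.log n - Real.log m)| ≤ C ∧
    |∑ k ∈ Finset.Ico m (n + 1), rsC1 k - (Real.log n - Real.log m)| ≤ C := by
  obtain ⟨C, hC, hl⟩ := rs_mertens_lower
  have h4 : 0 ≤ Real.log 4 := Real.log_nonneg (by norm_num)
  have hc : ∀ k : ℕ, 0 ≤ rsC1 k ∧ rsC1 k ≤ 1 := by
    intro k
    unfold rsC1
    split_ifs with hk
    · have : (1 : ℝ) ≤ k := by exact_mod_cast hk.one_lt.le
      refine ⟨div_nonneg (Real.log_nonneg this) (by linarith), ?_⟩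
      rw [div_le_one (by linarith)]
      have := Real.log_le_sub_one_of_pos (x := k) (by linarith)
      linarith
    · constructor <;> norm_num
  have hb : ∀ n : ℕ, 1 ≤ n → |∑ k ∈ Finset.range (n + 1), rsC1 k - Real.log n| ≤ C + Real.log 4 := by
    intro n hn
    rw [abs_le]
    constructor <;> linarith [hl n hn, rs_mertens_upper n hn]
  refine ⟨2 * (C + Real.log 4) + 2, by positivity, ?_⟩
  intro m n hm hmn
  have e1 := hb m (by omega)
  have e2 := hb n (by omega)
  rw [Finset.sum_range_succ] at e1 e2
  rw [Finset.sum_Ico_succ_top hmn, Finset.sum_Ico_eq_sub _ hmn]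
  rw [abs_le] at e1 e2
  have c1 := hc m
  have c2 := hc n
  rw [abs_le, abs_le]
  refine ⟨⟨?_, ?_⟩, ?_, ?_⟩ <;> linarith

/-- Abel summation, antitone weights, upper bound -/
lemma rs_abel_anti_upper (c N g G : ℕ → ℝ) (m n : ℕ) (η : ℝ) (hmn : m ≤ n)
    (hc : ∀ k, 0 ≤ c k)
    (hg : ∀ k, m ≤ k → k < n → g (k + 1) ≤ g k) (hg0 : 0 ≤ g n)
    (hM : ∀ k, m ≤ k → k ≤ n → ∑ i ∈ Finset.Ico m (k + 1), c i ≤ N k - N m + η)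
    (hG : ∀ k, m ≤ k → k < n → (N (k + 1) - N k) * g (k + 1) ≤ G (k + 1) - G k) :
    ∑ k ∈ Finset.Ico m n, c k * g k ≤ G n - G m + η * g m := by
  have key : ∀ l, m ≤ l → l ≤ n →
      (N l - N m + η - ∑ i ∈ Finset.Ico m l, c i) * g l ≤
        G l - G m + η * g m - ∑ k ∈ Finset.Ico m l, c k * g k := by
    intro l hl
    induction l, hl using Nat.le_induction with
    | base => intro _; simp
    | succ l hl ih =>
      intro hln
      have ih' := ih (by omega)
      have h1 := hM l hl (by omega)
      have h2 := hG l hl (by omega)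
      have h3 := hg l hl (by omega)
      rw [Finset.sum_Ico_succ_top hl] at h1 ⊢
      rw [Finset.sum_Ico_succ_top hl]
      nlinarith
  have h := key n hmn le_rfl
  have h1 := hM n hmn le_rfl
  rw [Finset.sum_Ico_succ_top hmn] at h1
  have h2 := hc n
  nlinarith

/-- Abel summation, antitone weights, lower bound -/
lemma rs_abel_anti_lower (c N g G : ℕ → ℝ) (m n : ℕ) (η : ℝ) (hmn : m ≤ n)
    (hg : ∀ k, m ≤ k → k < n → g (k + 1) ≤ g k) (hg0 : 0 ≤ g n)
    (hM : ∀ k, m ≤ k → k ≤ n → N k - N m - η ≤ ∑ i ∈ Finset.Ico m k, c i)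
    (hG : ∀ k, m ≤ k → k < n → G (k + 1) - G k ≤ (N (k + 1) - N k) * g k) :
    G n - G m - η * g m ≤ ∑ k ∈ Finset.Ico m n, c k * g k := by
  have key : ∀ l, m ≤ l → l ≤ n →
      (∑ i ∈ Finset.Ico m l, c i - (N l - N m) + η) * g l ≤
        ∑ k ∈ Finset.Ico m l, c k * g k - (G l - G m) + η * g m := by
    intro l hl
    induction l, hl using Nat.le_induction with
    | base => intro _; simp
    | succ l hl ih =>
      intro hln
      have ih' := ih (by omega)
      have h1 := hM (l + 1) (by omega) hln
      have h2 := hG l hl (by omega)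
      have h3 := hg l hl (by omega)
      rw [Finset.sum_Ico_succ_top hl] at h1 ⊢
      rw [Finset.sum_Ico_succ_top hl]
      nlinarith
  have h := key n hmn le_rfl
  have h1 := hM n hmn le_rfl
  nlinarith

/-- Abel summation, monotone weights, upper bound -/
lemma rs_abel_mono_upper (c N g G : ℕ → ℝ) (m n : ℕ) (η B : ℝ) (hmn : m ≤ n) (hη : 0 ≤ η)
    (hg : ∀ k, m ≤ k → k < n → g k ≤ g (k + 1)) (hg0 : 0 ≤ g m) (hgB : g n ≤ B)
    (hMl : ∀ k, m ≤ k → k ≤ n → N k - N m - η ≤ ∑ i ∈ Finset.Ico m k, c i)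
    (hMu : ∑ i ∈ Finset.Ico m n, c i ≤ N n - N m + η) (hB : 0 ≤ B)
    (hG : ∀ k, m ≤ k → k < n → (N (k + 1) - N k) * g k ≤ G (k + 1) - G k) :
    ∑ k ∈ Finset.Ico m n, c k * g k ≤ G n - G m + 2 * η * B := by
  have h := rs_abel_anti_lower c N (fun k => B - g k) (fun k => B * N k - G k) m n η hmn
    (fun k h1 h2 => by have := hg k h1 h2; linarith) (by linarith) hMl
    (fun k h1 h2 => by have := hG k h1 h2; nlinarith)
  have e : ∑ k ∈ Finset.Ico m n, c k * (B - g k) =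
      B * ∑ k ∈ Finset.Ico m n, c k - ∑ k ∈ Finset.Ico m n, c k * g k := by
    rw [Finset.mul_sum, ← Finset.sum_sub_distrib]
    apply Finset.sum_congr rfl; intros; ring
  rw [e] at h
  have h1 : B * ∑ i ∈ Finset.Ico m n, c i ≤ B * (N n - N m + η) := mul_le_mul_of_nonneg_left hMu hB
  have h2 : 0 ≤ η * g m := mul_nonneg hη hg0
  nlinarith


noncomputable def rsC2 (k : ℕ) : ℝ := if k.Prime then 1 / (k : ℝ) else 0
noncomputable def rsC3 (k : ℕ) : ℝ := if k.Prime then 1 / ((k : ℝ) * Real.log k) else 0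

lemma rs_log_succ {k : ℕ} (hk : 2 ≤ k) :
    0 < Real.log k ∧ Real.log k ≤ Real.log ((k + 1 : ℕ) : ℝ) := by
  have h2 : (2 : ℝ) ≤ k := by exact_mod_cast hk
  refine ⟨Real.log_pos (by linarith), Real.log_le_log (by linarith) (by push_cast; linarith)⟩

lemma rs_log_mono {k l : ℕ} (hk : 2 ≤ k) (h : k ≤ l) : Real.log k ≤ Real.log l :=
  Real.log_le_log (by exact_mod_cast (by omega : 0 < k)) (by exact_mod_cast h)

lemma rsC1_nonneg (k : ℕ) : 0 ≤ rsC1 k := by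
  unfold rsC1
  split_ifs with hk
  · exact div_nonneg (Real.log_nonneg (by exact_mod_cast hk.one_lt.le)) (by positivity)
  · exact le_rfl

lemma rsC2_nonneg (k : ℕ) : 0 ≤ rsC2 k := by
  unfold rsC2; split_ifs <;> positivity

lemma rsC3_nonneg (k : ℕ) : 0 ≤ rsC3 k := by
  unfold rsC3
  split_ifs with hk
  · have := Real.log_nonneg (x := k) (by exact_mod_cast hk.one_lt.le)
    positivity
  · exact le_rfl

lemma rs_mertens2 : ∃ C : ℝ, 0 ≤ C ∧ ∀ m n : ℕ, 2 ≤ m → m ≤ n →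
    |∑ k ∈ Finset.Ico m n, rsC2 k - (Real.log (Real.log n) - Real.log (Real.log m))|
      ≤ C / Real.log m ∧
    |∑ k ∈ Finset.Ico m (n + 1), rsC2 k - (Real.log (Real.log n) - Real.log (Real.log m))|
      ≤ C / Real.log m := by
  obtain ⟨C, hC, h⟩ := rs_mertens1
  refine ⟨C + 1, by linarith, ?_⟩
  intro m n hm hmn
  have hlm := (rs_log_succ hm).1
  have hln := (rs_log_succ (hm.trans hmn)).1
  have heq : ∑ k ∈ Finset.Ico m n, rsC2 k = ∑ k ∈ Finset.Ico m n, rsC1 k * (1 / Real.log k) := by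
    apply Finset.sum_congr rfl
    intro k hk
    rw [Finset.mem_Ico] at hk
    have := (rs_log_succ (hm.trans hk.1)).1
    unfold rsC1 rsC2
    split_ifs
    · field_simp
    · simp
  have hu : ∑ k ∈ Finset.Ico m n, rsC2 k ≤
      Real.log (Real.log n) - Real.log (Real.log m) + C * (1 / Real.log m) := by
    rw [heq]
    apply rs_abel_anti_upper rsC1 (fun k => Real.log k) (fun k => 1 / Real.log k)
      (fun k => Real.log (Real.log k)) m n C hmn rsC1_nonneg
    · intro k h1 h2
      have := rs_log_succ (hm.trans h1)
      exact one_div_le_one_div_of_le this.1 this.2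
    · positivity
    · intro k h1 h2
      have := (abs_le.1 (h m k hm h1).2).2
      linarith
    · intro k h1 h2
      have := rs_log_succ (hm.trans h1)
      have hp : 0 < Real.log ((k + 1 : ℕ) : ℝ) := by linarith
      rw [← Real.log_div hp.ne' this.1.ne']
      have h3 := Real.one_sub_inv_le_log_of_pos (div_pos hp this.1)
      refine le_trans (le_of_eq ?_) h3
      field_simp
  have hl : Real.log (Real.log n) - Real.log (Real.log m) - C * (1 / Real.log m) ≤
      ∑ k ∈ Finset.Ico m n, rsC2 k := by
    rw [heq]
    apply rs_abel_anti_lower rsC1 (fun k => Real.log k) (fun k => 1 / Real.log k)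
      (fun k => Real.log (Real.log k)) m n C hmn
    · intro k h1 h2
      have := rs_log_succ (hm.trans h1)
      exact one_div_le_one_div_of_le this.1 this.2
    · positivity
    · intro k h1 h2
      have := (abs_le.1 (h m k hm h1).1).1
      linarith
    · intro k h1 h2
      have := rs_log_succ (hm.trans h1)
      have hp : 0 < Real.log ((k + 1 : ℕ) : ℝ) := by linarith
      rw [← Real.log_div hp.ne' this.1.ne']
      have h3 := Real.log_le_sub_one_of_pos (div_pos hp this.1)
      refine le_trans h3 (le_of_eq ?_)
      rw [mul_one_div, sub_div, div_self this.1.ne']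
  have e : rsC2 n ≤ 1 / Real.log m := by
    unfold rsC2
    have hnm : Real.log m ≤ n := by
      have h1 := Real.log_le_sub_one_of_pos (x := m) (by exact_mod_cast (by omega : 0 < m))
      have h2 : (m : ℝ) ≤ n := by exact_mod_cast hmn
      linarith
    split_ifs
    · exact one_div_le_one_div_of_le hlm hnm
    · positivity
  have e0 := rsC2_nonneg n
  have e1 : (C + 1) / Real.log m = C * (1 / Real.log m) + 1 / Real.log m := by ring
  have e2 : 0 < 1 / Real.log m := by positivity
  rw [Finset.sum_Ico_succ_top hmn, e1, abs_le, abs_le]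
  refine ⟨⟨?_, ?_⟩, ?_, ?_⟩ <;> linarith

lemma rs_mertens3 : ∃ C : ℝ, 0 ≤ C ∧ ∀ m n : ℕ, 2 ≤ m → m ≤ n →
    |∑ k ∈ Finset.Ico m n, rsC3 k - (1 / Real.log m - 1 / Real.log n)|
      ≤ C / Real.log m ^ 2 ∧
    |∑ k ∈ Finset.Ico m (n + 1), rsC3 k - (1 / Real.log m - 1 / Real.log n)|
      ≤ C / Real.log m ^ 2 := by
  obtain ⟨C, hC, h⟩ := rs_mertens1
  refine ⟨C + 1, by linarith, ?_⟩
  intro m n hm hmn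
  have hlm := (rs_log_succ hm).1
  have hln := (rs_log_succ (hm.trans hmn)).1
  have heq : ∑ k ∈ Finset.Ico m n, rsC3 k = ∑ k ∈ Finset.Ico m n, rsC1 k * (1 / Real.log k ^ 2) := by
    apply Finset.sum_congr rfl
    intro k hk
    rw [Finset.mem_Ico] at hk
    have := (rs_log_succ (hm.trans hk.1)).1
    unfold rsC1 rsC3
    split_ifs
    · field_simp
    · simp
  have hu : ∑ k ∈ Finset.Ico m n, rsC3 k ≤
      -(1 / Real.log n) - -(1 / Real.log m) + C * (1 / Real.log m ^ 2) := by
    rw [heq]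
    apply rs_abel_anti_upper rsC1 (fun k => Real.log k) (fun k => 1 / Real.log k ^ 2)
      (fun k => -(1 / Real.log k)) m n C hmn rsC1_nonneg
    · intro k h1 h2
      have := rs_log_succ (hm.trans h1)
      exact one_div_le_one_div_of_le (by nlinarith) (by nlinarith)
    · positivity
    · intro k h1 h2
      have := (abs_le.1 (h m k hm h1).2).2
      linarith
    · intro k h1 h2
      have := rs_log_succ (hm.trans h1)
      have hp : 0 < Real.log ((k + 1 : ℕ) : ℝ) := by linarith
      set x := Real.log k
      set y := Real.log ((k + 1 : ℕ) : ℝ)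
      have : -(1 / y) - -(1 / x) - (y - x) * (1 / y ^ 2) = (y - x) ^ 2 / (x * y ^ 2) := by
        have hx : x ≠ 0 := this.1.ne'
        field_simp
        ring
      have h0 : 0 ≤ (y - x) ^ 2 / (x * y ^ 2) := by
        have hx := (rs_log_succ (hm.trans h1)).1
        positivity
      linarith
  have hl : -(1 / Real.log n) - -(1 / Real.log m) - C * (1 / Real.log m ^ 2) ≤
      ∑ k ∈ Finset.Ico m n, rsC3 k := by
    rw [heq]
    apply rs_abel_anti_lower rsC1 (fun k => Real.log k) (fun k => 1 / Real.log k ^ 2)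
      (fun k => -(1 / Real.log k)) m n C hmn
    · intro k h1 h2
      have := rs_log_succ (hm.trans h1)
      exact one_div_le_one_div_of_le (by nlinarith) (by nlinarith)
    · positivity
    · intro k h1 h2
      have := (abs_le.1 (h m k hm h1).1).1
      linarith
    · intro k h1 h2
      have := rs_log_succ (hm.trans h1)
      have hp : 0 < Real.log ((k + 1 : ℕ) : ℝ) := by linarith
      set x := Real.log k
      set y := Real.log ((k + 1 : ℕ) : ℝ)
      have : (y - x) * (1 / x ^ 2) - (-(1 / y) - -(1 / x)) = (y - x) ^ 2 / (y * x ^ 2) := by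
        have hx : x ≠ 0 := this.1.ne'
        field_simp
        ring
      have h0 : 0 ≤ (y - x) ^ 2 / (y * x ^ 2) := by
        positivity
      linarith
  have e : rsC3 n ≤ 1 / Real.log m ^ 2 := by
    unfold rsC3
    have hnm : Real.log m ≤ n := by
      have h1 := Real.log_le_sub_one_of_pos (x := m) (by exact_mod_cast (by omega : 0 < m))
      have h2 : (m : ℝ) ≤ n := by exact_mod_cast hmn
      linarith
    have h4 := rs_log_mono hm hmn
    split_ifs
    · exact one_div_le_one_div_of_le (by positivity) (by nlinarith)
    · positivity
  have e0 := rsC3_nonneg n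
  have e1 : (C + 1) / Real.log m ^ 2 = C * (1 / Real.log m ^ 2) + 1 / Real.log m ^ 2 := by ring
  have e2 : 0 < 1 / Real.log m ^ 2 := by positivity
  rw [Finset.sum_Ico_succ_top hmn, e1, abs_le, abs_le]
  refine ⟨⟨?_, ?_⟩, ?_, ?_⟩ <;> linarith

/-- product of `1 - 1/p` over primes `m ≤ p < n` -/
noncomputable def rsV (m n : ℕ) : ℝ :=
  ∏ k ∈ Finset.range n, if k.Prime ∧ m ≤ k then 1 - 1 / (k : ℝ) else 1

lemma rsV_zero (m : ℕ) : rsV m 0 = 1 := by simp [rsV]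

lemma rsV_succ (m n : ℕ) :
    rsV m (n + 1) = rsV m n - if n.Prime ∧ m ≤ n then 1 / (n : ℝ) * rsV m n else 0 := by
  unfold rsV
  rw [Finset.prod_range_succ]
  split_ifs <;> ring

lemma rsV_pos (m n : ℕ) : 0 < rsV m n := by
  unfold rsV
  apply Finset.prod_pos
  intro k _
  split_ifs with h
  · have h1 : (1 : ℝ) < k := by exact_mod_cast h.1.one_lt
    have : 1 / (k : ℝ) < 1 := by rw [div_lt_one (by linarith)]; exact h1
    linarith
  · norm_num

lemma rsV_le_one (m n : ℕ) : rsV m n ≤ 1 := by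
  induction n with
  | zero => rw [rsV_zero]
  | succ n ih =>
    rw [rsV_succ]
    have := (rsV_pos m n).le
    split_ifs
    · have : 0 ≤ 1 / (n : ℝ) * rsV m n := by positivity
      linarith
    · linarith

lemma rsV_anti (m : ℕ) : Antitone (rsV m) := by
  apply antitone_nat_of_succ_le
  intro n
  rw [rsV_succ]
  have := (rsV_pos m n).le
  split_ifs
  · have : 0 ≤ 1 / (n : ℝ) * rsV m n := by positivity
    linarith
  · linarith

lemma rsV_bounds : ∃ c C : ℝ, 0 < c ∧ 0 < C ∧ ∀ n : ℕ, 2 ≤ n →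
    c / Real.log n ≤ rsV 0 n ∧ rsV 0 n ≤ C / Real.log n := by
  obtain ⟨C, hC, h⟩ := rs_mertens2
  have hl2 : 0 < Real.log 2 := Real.log_pos (by norm_num)
  have key1 : ∀ n : ℕ, 2 ≤ n → Real.log (rsV 0 n) ≤ - ∑ k ∈ Finset.Ico 2 n, rsC2 k := by
    intro n hn
    induction n, hn using Nat.le_induction with
    | base =>
      simp only [Finset.Ico_self, Finset.sum_empty, neg_zero]
      exact Real.log_nonpos (rsV_pos _ _).le (rsV_le_one _ _)
    | succ n hn ih =>
      rw [Finset.sum_Ico_succ_top hn]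
      unfold rsV
      rw [Finset.prod_range_succ]
      change Real.log (rsV 0 n * _) ≤ _
      have hp := rsV_pos 0 n
      by_cases hnp : n.Prime
      · have h1 : (1 : ℝ) < n := by exact_mod_cast hnp.one_lt
        have h2 : 1 / (n : ℝ) < 1 := by rw [div_lt_one (by linarith)]; exact h1
        rw [if_pos ⟨hnp, Nat.zero_le _⟩, Real.log_mul hp.ne' (by linarith)]
        have := Real.log_le_sub_one_of_pos (x := 1 - 1 / (n : ℝ)) (by linarith)
        unfold rsC2 at *
        rw [if_pos hnp]
        linarith
      · rw [if_neg (fun h => hnp h.1), mul_one]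
        unfold rsC2 at *
        rw [if_neg hnp]
        linarith
  have key2 : ∀ n : ℕ, 2 ≤ n →
      - ∑ k ∈ Finset.Ico 2 n, rsC2 k - 2 * (1 - 1 / ((n : ℝ) - 1)) ≤ Real.log (rsV 0 n) := by
    intro n hn
    induction n, hn using Nat.le_induction with
    | base =>
      have : rsV 0 2 = 1 := by
        rw [show (2 : ℕ) = 1 + 1 from rfl, rsV_succ, rsV_succ, rsV_zero]
        norm_num
      rw [this]
      norm_num
    | succ n hn ih =>
      rw [Finset.sum_Ico_succ_top hn]
      unfold rsV
      rw [Finset.prod_range_succ]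
      change _ ≤ Real.log (rsV 0 n * _)
      have hp := rsV_pos 0 n
      have h1 : (2 : ℝ) ≤ n := by exact_mod_cast hn
      have hd : 1 / ((n : ℝ) - 1) - 1 / n = 1 / (n * ((n : ℝ) - 1)) := by
        have : (n : ℝ) - 1 ≠ 0 := by linarith
        field_simp
        ring
      have hd0 : 0 ≤ 1 / (n * ((n : ℝ) - 1)) := by
        have : 0 < (n : ℝ) - 1 := by linarith
        positivity
      push_cast
      rw [show (n : ℝ) + 1 - 1 = n by ring]
      by_cases hnp : n.Prime
      · have h2 : 1 / (n : ℝ) < 1 := by rw [div_lt_one (by linarith)]; linarith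
        rw [if_pos ⟨hnp, Nat.zero_le _⟩, Real.log_mul hp.ne' (by linarith)]
        have h3 := Real.one_sub_inv_le_log_of_pos (x := 1 - 1 / (n : ℝ)) (by linarith)
        have h4 : 1 - (1 - 1 / (n : ℝ))⁻¹ = - (1 / n) - 1 / (n * ((n : ℝ) - 1)) := by
          have : (n : ℝ) - 1 ≠ 0 := by linarith
          have : 1 - 1 / (n : ℝ) ≠ 0 := by linarith
          have h5 : 1 - 1 / (n : ℝ) = ((n : ℝ) - 1) / n := by field_simp
          rw [h5]
          field_simp
          ring
        unfold rsC2 at *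
        rw [if_pos hnp]
        linarith
      · rw [if_neg (fun h => hnp h.1), mul_one]
        unfold rsC2 at *
        rw [if_neg hnp]
        linarith
  set K : ℝ := C / Real.log (2 : ℕ) with hK
  refine ⟨Real.exp (Real.log (Real.log 2) - K - 2), Real.exp (Real.log (Real.log 2) + K),
    Real.exp_pos _, Real.exp_pos _, ?_⟩
  intro n hn
  have hln := (rs_log_succ hn).1
  have hp := rsV_pos 0 n
  have hm := abs_le.1 (h 2 n le_rfl hn).1
  rw [← hK] at hm
  have hn1 : 0 ≤ 1 / ((n : ℝ) - 1) := by
    have : (2 : ℝ) ≤ n := by exact_mod_cast hn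
    have : 0 < (n : ℝ) - 1 := by linarith
    positivity
  have e2 : Real.log ((2 : ℕ) : ℝ) = Real.log 2 := by norm_num
  rw [e2] at hm
  constructor
  · rw [← Real.exp_log hln, ← Real.exp_sub, ← Real.exp_log hp, Real.exp_le_exp]
    have := key2 n hn
    linarith
  · rw [← Real.exp_log hln, ← Real.exp_sub, ← Real.exp_log hp, Real.exp_le_exp]
    have := key1 n hn
    linarith


noncomputable def rsW (m β : ℕ) : ℕ → Bool → ℝ → ℝ
  | 0, _, _ => 1
  | n + 1, b, D => rsW m β n b D -
      if n.Prime ∧ m ≤ n ∧ (b = true → (n : ℝ) ^ (β + 1) < D) then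
        (1 / (n : ℝ)) * rsW m β n (!b) (D / n) else 0

def rsCond (β : ℕ) (b : Bool) (lvl : ℝ) (L : List ℕ) : Prop :=
  ∀ m : ℕ, 1 ≤ m → m ≤ L.length → (if b then Odd m else Even m) →
        (((L.take m).prod : ℕ) : ℝ) * ((L.getD (m - 1) 1 : ℕ) : ℝ) ^ β < lvl

lemma rsCond_cons (β : ℕ) (b : Bool) (lvl : ℝ) (n : ℕ) (hn : 0 < n) (L : List ℕ) :
    rsCond β b lvl (n :: L) ↔ (b = true → (n : ℝ) ^ (β + 1) < lvl) ∧
      rsCond β (!b) (lvl / n) L := by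
  have hn' : (0 : ℝ) < n := by exact_mod_cast hn
  constructor
  · intro h
    refine ⟨?_, ?_⟩
    · intro hb
      have := h 1 le_rfl (by simp) (by simp [hb])
      simp at this
      rw [pow_succ, mul_comm]
      exact this
    · intro m hm1 hm2 hp
      have h1 := h (m + 1) (by omega) (by simpa using hm2) (by
        cases b <;> grind)
      obtain ⟨j, rfl⟩ : ∃ j, m = j + 1 := ⟨m - 1, by omega⟩
      rw [lt_div_iff₀ hn']
      simp only [List.take_succ_cons, List.prod_cons, Nat.add_sub_cancel, List.getD_cons_succ] at h1 ⊢
      push_cast at h1 ⊢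
      nlinarith [h1]
  · rintro ⟨h0, h⟩ m hm1 hm2 hp
    obtain ⟨j, rfl⟩ : ∃ j, m = j + 1 := ⟨m - 1, by omega⟩
    rcases Nat.eq_zero_or_pos j with rfl | hj
    · have hb : b = true := by
        cases b
        · simp at hp
        · rfl
      have := h0 hb
      rw [pow_succ, mul_comm] at this
      simpa using this
    · have h1 := h j hj (by simpa using hm2) (by
        cases b <;> simp_all [Nat.even_add_one, Nat.odd_add_one])
      obtain ⟨i, rfl⟩ : ∃ i, j = i + 1 := ⟨j - 1, by omega⟩
      rw [lt_div_iff₀ hn'] at h1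
      simp only [List.take_succ_cons, List.prod_cons, Nat.add_sub_cancel, List.getD_cons_succ] at h1 ⊢
      push_cast at h1 ⊢
      nlinarith [h1]

lemma rs_pfl (n d : ℕ) (hn : n.Prime) (hd : d ≠ 0) (h : ∀ p ∈ d.primeFactors, p < n) :
    (n * d).primeFactorsList.reverse = n :: d.primeFactorsList.reverse := by
  have h1 : (n * d).primeFactorsList = d.primeFactorsList ++ [n] := by
    apply List.Perm.eq_of_pairwise (le := (· ≤ ·))
    · intro a b _ _ h1 h2; exact le_antisymm h1 h2
    · exact (Nat.primeFactorsList_sorted _).pairwise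
    · rw [List.pairwise_append]
      refine ⟨(Nat.primeFactorsList_sorted _).pairwise, by simp, ?_⟩
      intro a ha b hb
      simp at hb
      subst hb
      exact (h a (by simpa using ha)).le
    · refine (Nat.perm_primeFactorsList_mul hn.ne_zero hd).trans ?_
      rw [Nat.primeFactorsList_prime hn]
      exact List.perm_append_comm
  rw [h1]; simp

lemma rs_sw_eq (lo hi lvl : ℝ) (β : ℕ) (b : Bool) (d : ℕ) :
    sieveWeight lo hi lvl β b d = if Squarefree d ∧
      (∀ p ∈ d.primeFactors, lo ≤ (p : ℝ) ∧ (p : ℝ) < hi) ∧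
        rsCond β b lvl d.primeFactorsList.reverse
      then (ArithmeticFunction.moebius d : ℝ) else 0 := by
  unfold sieveWeight rsCond
  simp only [List.length_reverse]

lemma rs_sw_cons (lo hi lvl : ℝ) (β : ℕ) (b : Bool) (n d : ℕ) (hn : n.Prime) (hhi : (n : ℝ) < hi)
    (hd : Squarefree d) (h : ∀ p ∈ d.primeFactors, p < n) :
    sieveWeight lo hi lvl β b (n * d) =
      if lo ≤ (n : ℝ) ∧ (b = true → (n : ℝ) ^ (β + 1) < lvl) then
        - sieveWeight lo hi (lvl / n) β (!b) d else 0 := by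
  have hnd : n.Coprime d := by
    rw [Nat.Prime.coprime_iff_not_dvd hn]
    intro hdv
    exact lt_irrefl _ (h n (Nat.mem_primeFactors.2 ⟨hn, hdv, hd.ne_zero⟩))
  have hsq : Squarefree (n * d) := (Nat.squarefree_mul hnd).2 ⟨hn.squarefree, hd⟩
  have hpf : (n * d).primeFactors = insert n d.primeFactors := by
    rw [Nat.primeFactors_mul hn.ne_zero hd.ne_zero, hn.primeFactors]; rfl
  have hc := rsCond_cons β b lvl n hn.pos d.primeFactorsList.reverse
  rw [← rs_pfl n d hn hd.ne_zero h] at hc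
  rw [rs_sw_eq, rs_sw_eq]
  simp only [hc, hpf, hsq, hd, true_and, Finset.forall_mem_insert, hhi, and_true]
  by_cases h1 : lo ≤ (n : ℝ) <;> by_cases h2 : (b = true → (n : ℝ) ^ (β + 1) < lvl)
  · simp only [h1, true_and]
    rw [ArithmeticFunction.IsMultiplicative.map_mul_of_coprime ArithmeticFunction.isMultiplicative_moebius hnd, ArithmeticFunction.moebius_apply_prime hn]
    split_ifs <;> first | (simp; done) | (exfalso; tauto)
  · rw [if_neg (by tauto), if_neg (by tauto)]
  · rw [if_neg (by tauto), if_neg (by tauto)]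
  · rw [if_neg (by tauto), if_neg (by tauto)]

def rsP (n : ℕ) : Finset ℕ := (Finset.range n).filter Nat.Prime

lemma rsP_succ (n : ℕ) : rsP (n + 1) = if n.Prime then insert n (rsP n) else rsP n := by
  unfold rsP
  rw [Finset.range_add_one, Finset.filter_insert]

lemma rsP_prime {n : ℕ} {t : Finset ℕ} (ht : t ⊆ rsP n) : ∀ p ∈ t, p.Prime := by
  intro p hp
  have := ht hp
  simp [rsP] at this
  exact this.2

lemma rsP_lt {n : ℕ} {t : Finset ℕ} (ht : t ⊆ rsP n) : ∀ p ∈ t, p < n := by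
  intro p hp
  have := ht hp
  simp [rsP] at this
  exact this.1

lemma rs_prod_sqf {t : Finset ℕ} (ht : ∀ p ∈ t, p.Prime) : Squarefree (∏ p ∈ t, p) := by
  apply Finset.squarefree_prod_of_pairwise_isCoprime
  · intro a ha b hb hab
    simp only [Function.onFun]
    exact Nat.coprime_iff_isRelPrime.1 ((Nat.coprime_primes (ht a ha) (ht b hb)).2 hab)
  · intro p hp
    exact (ht p hp).squarefree

lemma rs_sum_eq_W (lo hi : ℝ) (β : ℕ) (n : ℕ) (hn : n ≤ ⌈hi⌉₊) : ∀ (b : Bool) (lvl : ℝ),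
    ∑ t ∈ (rsP n).powerset, sieveWeight lo hi lvl β b (∏ p ∈ t, p) / ((∏ p ∈ t, p : ℕ) : ℝ) =
      rsW ⌈lo⌉₊ β n b lvl := by
  induction n with
  | zero =>
    intro b lvl
    simp only [rsP, rsW, Finset.range_zero, Finset.filter_empty, Finset.powerset_empty,
      Finset.sum_singleton, Finset.prod_empty, Nat.cast_one, div_one]
    rw [rs_sw_eq, if_pos]
    · simp
    · refine ⟨squarefree_one, by simp, ?_⟩
      intro m h1 h2
      simp at h2
      omega
  | succ n ih =>
    intro b lvl
    rw [rsP_succ]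
    unfold rsW
    have hn' : (n : ℝ) < hi := Nat.lt_ceil.1 (by omega)
    by_cases hp : n.Prime
    · rw [if_pos hp, Finset.sum_powerset_insert (by simp [rsP]), ih (by omega), sub_eq_add_neg]
      congr 1
      have e : ∀ t ∈ (rsP n).powerset, sieveWeight lo hi lvl β b (∏ p ∈ insert n t, p) /
          ((∏ p ∈ insert n t, p : ℕ) : ℝ) =
          if lo ≤ (n : ℝ) ∧ (b = true → (n : ℝ) ^ (β + 1) < lvl) then
            - (1 / (n : ℝ)) * (sieveWeight lo hi (lvl / n) β (!b) (∏ p ∈ t, p) / ((∏ p ∈ t, p : ℕ) : ℝ)) else 0 := by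
        intro t ht
        rw [Finset.mem_powerset] at ht
        have hnt : n ∉ t := fun h => lt_irrefl _ (rsP_lt ht n h)
        rw [Finset.prod_insert hnt, rs_sw_cons lo hi lvl β b n _ hp hn' (rs_prod_sqf (rsP_prime ht))]
        · split_ifs
          · push_cast
            rw [neg_div, neg_mul]
            congr 1
            rw [div_mul_div_comm, one_mul]
          · simp
        · rw [Nat.primeFactors_prod (rsP_prime ht)]
          exact rsP_lt ht
      rw [Finset.sum_congr rfl e]
      simp only [hp, true_and, Nat.ceil_le]
      split_ifs
      · rw [← Finset.mul_sum, ih (by omega)]; ring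
      · simp
    · rw [if_neg hp, ih (by omega), if_neg (fun h => hp h.1), sub_zero]

lemma rsW_bounds (m β n : ℕ) : ∀ D : ℝ, rsW m β n false D ≤ rsV m n ∧ rsV m n ≤ rsW m β n true D := by
  induction n with
  | zero => intro D; simp [rsW, rsV_zero]
  | succ n ih =>
    intro D
    have hV := rsV_pos m n
    have h1 := ih D
    have h2 := ih (D / n)
    rw [rsV_succ]
    unfold rsW
    simp only [Bool.false_eq_true, false_imp_iff, and_true, Bool.not_false, Bool.not_true]
    have h0 : (0 : ℝ) ≤ 1 / n := by positivity
    have h3 := mul_le_mul_of_nonneg_left h2.1 h0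
    have h4 := mul_le_mul_of_nonneg_left h2.2 h0
    have h5 := mul_nonneg h0 hV.le
    constructor
    · split_ifs <;> linarith
    · by_cases hp : n.Prime <;> by_cases hm : m ≤ n <;> simp only [hp, hm, true_and, false_and,
        if_false, if_true, forall_const] <;> try linarith
      split_ifs <;> linarith

lemma rsW_pos (m β n : ℕ) (D : ℝ) : 0 < rsW m β n true D :=
  (rsV_pos m n).trans_le (rsW_bounds m β n D).2

/-- unrolled recursion -/
lemma rsW_unroll (m β n : ℕ) (b : Bool) (D : ℝ) : rsW m β n b D = 1 - ∑ k ∈ Finset.range n,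
      if k.Prime ∧ m ≤ k ∧ (b = true → (k : ℝ) ^ (β + 1) < D) then
        (1 / (k : ℝ)) * rsW m β k (!b) (D / k) else 0 := by
  induction n with
  | zero => simp [rsW]
  | succ n ih => rw [Finset.sum_range_succ, rsW, ih]; ring

lemma rsV_unroll (m n : ℕ) : rsV m n = 1 - ∑ k ∈ Finset.range n,
      if k.Prime ∧ m ≤ k then (1 / (k : ℝ)) * rsV m k else 0 := by
  induction n with
  | zero => simp [rsV_zero]
  | succ n ih => rw [Finset.sum_range_succ, rsV_succ, ih]; ring

lemma rs_gcdPart (lo hi : ℝ) (t : Finset ℕ) (ht : ∀ p ∈ t, p.Prime) :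
    gcdPart lo hi (∏ p ∈ t, p) = ∏ p ∈ t.filter (fun p : ℕ => lo ≤ (p : ℝ) ∧ (p : ℝ) < hi), p := by
  unfold gcdPart
  rw [Nat.primeFactors_prod ht]

lemma rs_tsum_primorial (z : ℝ) (f : ℕ → ℝ) (hf : ∀ k, ¬ dividesPrimorial z k → f k = 0) :
    ∑' k, f k = ∑ t ∈ (rsP ⌈z⌉₊).powerset, f (∏ p ∈ t, p) := by
  have hinj : Set.InjOn (fun t : Finset ℕ => ∏ p ∈ t, p) ((rsP ⌈z⌉₊).powerset : Set (Finset ℕ)) := by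
    intro s hs t ht h
    simp only [Finset.coe_powerset, Set.mem_preimage, Set.mem_powerset_iff, Finset.coe_subset] at hs ht
    have := congrArg Nat.primeFactors h
    simp only at this
    rwa [Nat.primeFactors_prod (rsP_prime hs), Nat.primeFactors_prod (rsP_prime ht)] at this
  rw [← Finset.sum_image (f := f) hinj]
  apply tsum_eq_sum
  intro k hk
  apply hf
  rintro ⟨h1, h2⟩
  apply hk
  rw [Finset.mem_image]
  refine ⟨k.primeFactors, ?_, Nat.prod_primeFactors_of_squarefree h1⟩
  rw [Finset.mem_powerset]
  intro p hp
  simp only [rsP, Finset.mem_filter, Finset.mem_range]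
  exact ⟨Nat.lt_ceil.2 (h2 p hp), Nat.prime_of_mem_primeFactors hp⟩

lemma rs_sw_zero (lo hi lvl : ℝ) (β : ℕ) (b : Bool) (t : Finset ℕ) (ht : ∀ p ∈ t, p.Prime)
    (q : ℕ) (hq : q ∈ t) (h : ¬ (lo ≤ (q : ℝ) ∧ (q : ℝ) < hi)) :
    sieveWeight lo hi lvl β b (∏ p ∈ t, p) = 0 := by
  rw [rs_sw_eq, if_neg]
  rintro ⟨_, h2, _⟩
  rw [Nat.primeFactors_prod ht] at h2
  exact h (h2 q hq)

/-- the product formula for the vector sieve weights -/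
lemma rs_vec (w z D E : ℝ) (hw0 : 0 ≤ w) (hwz : w ≤ z) (b b' : Bool) :
    ∑' k : ℕ, (if dividesPrimorial z k then 1 else 0) *
      (sieveWeight w z D 2 b (gcdPart w z k) * sieveWeight 0 w E 30 b' (gcdPart 0 w k)) / (k : ℝ) =
      rsW ⌈w⌉₊ 2 ⌈z⌉₊ b D * rsW 0 30 ⌈w⌉₊ b' E := by
  rw [rs_tsum_primorial z]
  swap
  · intro k hk; simp [hk]
  rw [← rs_sum_eq_W w z 2 ⌈z⌉₊ le_rfl b D]
  have h0 := rs_sum_eq_W 0 w 30 ⌈w⌉₊ le_rfl b' E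
  rw [Nat.ceil_zero] at h0
  rw [← h0]
  set P1 := rsP ⌈w⌉₊ with hP1
  set P := rsP ⌈z⌉₊ with hP
  set P2 := P.filter (fun p : ℕ => w ≤ (p : ℝ) ∧ (p : ℝ) < z) with hP2
  have hceil : ⌈w⌉₊ ≤ ⌈z⌉₊ := Nat.ceil_le_ceil hwz
  have hsub : P2.powerset ⊆ P.powerset := Finset.powerset_mono.2 (Finset.filter_subset _ _)
  rw [← Finset.sum_subset (f := fun t : Finset ℕ => sieveWeight w z D 2 b (∏ p ∈ t, p) / ((∏ p ∈ t, p : ℕ) : ℝ)) hsub]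
  swap
  · intro t ht ht2
    rw [Finset.mem_powerset] at ht ht2
    rw [Finset.not_subset] at ht2
    obtain ⟨q, hq, hq2⟩ := ht2
    rw [rs_sw_zero w z D 2 b t (rsP_prime ht) q hq, zero_div]
    intro h
    exact hq2 (Finset.mem_filter.2 ⟨ht hq, h⟩)
  rw [Finset.sum_mul_sum, ← Finset.sum_product']
  have memP : ∀ p, p ∈ P ↔ p.Prime ∧ (p : ℝ) < z := by
    intro p; simp only [hP, rsP, Finset.mem_filter, Finset.mem_range, Nat.lt_ceil]; tauto
  have memP1 : ∀ p, p ∈ P1 ↔ p.Prime ∧ (p : ℝ) < w := by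
    intro p; simp only [hP1, rsP, Finset.mem_filter, Finset.mem_range, Nat.lt_ceil]; tauto
  have memP2 : ∀ p, p ∈ P2 ↔ p.Prime ∧ w ≤ (p : ℝ) ∧ (p : ℝ) < z := by
    intro p; rw [hP2, Finset.mem_filter, memP]; tauto
  refine Finset.sum_nbij' (fun t => (t.filter (fun p : ℕ => w ≤ (p : ℝ) ∧ (p : ℝ) < z),
    t.filter (fun p : ℕ => 0 ≤ (p : ℝ) ∧ (p : ℝ) < w))) (fun x => x.1 ∪ x.2) ?_ ?_ ?_ ?_ ?_
  · intro t ht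
    rw [Finset.mem_powerset] at ht
    rw [Finset.mem_product, Finset.mem_powerset, Finset.mem_powerset]
    refine ⟨Finset.filter_subset_filter _ ht, ?_⟩
    intro p hp
    rw [Finset.mem_filter] at hp
    rw [memP1]
    exact ⟨((memP p).1 (ht hp.1)).1, hp.2.2⟩
  · rintro ⟨s, t⟩ hst
    rw [Finset.mem_product, Finset.mem_powerset, Finset.mem_powerset] at hst
    rw [Finset.mem_powerset]
    intro p hp
    rw [memP]
    rcases Finset.mem_union.1 hp with h | h
    · have := (memP2 p).1 (hst.1 h); tauto
    · have := (memP1 p).1 (hst.2 h); exact ⟨this.1, this.2.trans_le hwz⟩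
  · intro t ht
    rw [Finset.mem_powerset] at ht
    ext p
    simp only [Finset.mem_union, Finset.mem_filter]
    constructor
    · tauto
    · intro hp
      have h1 := (memP p).1 (ht hp)
      rcases le_or_gt w (p : ℝ) with h | h
      · tauto
      · exact Or.inr ⟨hp, Nat.cast_nonneg _, h⟩
  · rintro ⟨s, t⟩ hst
    rw [Finset.mem_product, Finset.mem_powerset, Finset.mem_powerset] at hst
    have h1 : ∀ p ∈ s, w ≤ (p : ℝ) ∧ (p : ℝ) < z := fun p hp => ((memP2 p).1 (hst.1 hp)).2
    have h2 : ∀ p ∈ t, (p : ℝ) < w := fun p hp => ((memP1 p).1 (hst.2 hp)).2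
    ext p
    · simp only [Finset.mem_union, Finset.mem_filter]
      constructor
      · rintro ⟨h | h, h3⟩
        · exact h
        · have := h2 p h; linarith
      · intro h; exact ⟨Or.inl h, h1 p h⟩
    · simp only [Finset.mem_union, Finset.mem_filter]
      constructor
      · rintro ⟨h | h, h3⟩
        · have := h1 p h; linarith
        · exact h
      · intro h; exact ⟨Or.inr h, Nat.cast_nonneg _, h2 p h⟩
  · intro t ht
    rw [Finset.mem_powerset] at ht
    have hpr := rsP_prime ht
    rw [rs_gcdPart _ _ t hpr, rs_gcdPart _ _ t hpr]
    have hdp : dividesPrimorial z (∏ p ∈ t, p) := by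
      refine ⟨rs_prod_sqf hpr, ?_⟩
      rw [Nat.primeFactors_prod hpr]
      intro p hp
      exact ((memP p).1 (ht hp)).2
    rw [if_pos hdp, one_mul]
    have hprod : ∏ p ∈ t, p = (∏ p ∈ t.filter (fun p : ℕ => w ≤ (p : ℝ) ∧ (p : ℝ) < z), p) *
        ∏ p ∈ t.filter (fun p : ℕ => 0 ≤ (p : ℝ) ∧ (p : ℝ) < w), p := by
      rw [← Finset.prod_filter_mul_prod_filter_not t (fun p : ℕ => w ≤ (p : ℝ) ∧ (p : ℝ) < z)]
      congr 1
      apply Finset.prod_congr _ (fun _ _ => rfl)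
      apply Finset.filter_congr
      intro p hp
      have h1 := (memP p).1 (ht hp)
      constructor
      · intro h
        refine ⟨Nat.cast_nonneg _, ?_⟩
        by_contra h3
        exact h ⟨not_lt.1 h3, h1.2⟩
      · rintro ⟨_, h⟩ ⟨h3, _⟩
        linarith
    rw [hprod, Nat.cast_mul, div_mul_div_comm]


lemma rs_alphaMinus_tsum (w z D E : ℝ) (hw0 : 0 ≤ w) (hwz : w ≤ z) :
    ∑' k : ℕ, alphaMinus w z D E k / (k : ℝ) =
      rsW ⌈w⌉₊ 2 ⌈z⌉₊ true D * rsW 0 30 ⌈w⌉₊ false E +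
      rsW ⌈w⌉₊ 2 ⌈z⌉₊ false D * rsW 0 30 ⌈w⌉₊ true E -
      rsW ⌈w⌉₊ 2 ⌈z⌉₊ true D * rsW 0 30 ⌈w⌉₊ true E := by
  rw [← rs_vec w z D E hw0 hwz, ← rs_vec w z D E hw0 hwz, ← rs_vec w z D E hw0 hwz]
  rw [rs_tsum_primorial z, rs_tsum_primorial z, rs_tsum_primorial z, rs_tsum_primorial z,
    ← Finset.sum_add_distrib, ← Finset.sum_sub_distrib]
  · apply Finset.sum_congr rfl
    intro t _
    unfold alphaMinus
    ring
  all_goals intro k hk; simp [hk, alphaMinus]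

lemma rs_alphaPlus_tsum (w z D E p : ℝ) (hw0 : 0 ≤ w) (hwz : w ≤ z) :
    ∑' k : ℕ, alphaPlusLevel w z D E k / ((k : ℝ) * p) =
      rsW ⌈w⌉₊ 2 ⌈z⌉₊ true D * rsW 0 30 ⌈w⌉₊ true E / p := by
  rw [← rs_vec w z D E hw0 hwz, div_eq_mul_inv, ← tsum_mul_right]
  apply tsum_congr
  intro k
  unfold alphaPlusLevel
  rw [div_mul_eq_div_div, div_eq_mul_inv _ p, mul_assoc (ite _ _ _)]

lemma rs_mainTerm_eq (w z y D E : ℝ) (ψ : ℝ → ℝ) (hw0 : 0 ≤ w) (hwz : w ≤ z) :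
    richertMainTerm w z y D E ψ =
      (rsW ⌈w⌉₊ 2 ⌈z⌉₊ true D * rsW 0 30 ⌈w⌉₊ false E +
      rsW ⌈w⌉₊ 2 ⌈z⌉₊ false D * rsW 0 30 ⌈w⌉₊ true E -
      rsW ⌈w⌉₊ 2 ⌈z⌉₊ true D * rsW 0 30 ⌈w⌉₊ true E) -
    ∑ a ∈ Finset.Icc (⌊Real.log z / Real.log (Real.sqrt 2)⌋₊ - 2)
        ⌊Real.log y / Real.log (Real.sqrt 2)⌋₊,
      ∑' p : ℕ, if p.Prime then
          (ψ ((p : ℝ) / Real.sqrt 2 ^ a) - ψ ((p : ℝ) / Real.sqrt 2 ^ a / Real.sqrt 2)) *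
            (1 - Real.log p / Real.log y) *
            (rsW ⌈w⌉₊ 2 ⌈z⌉₊ true (D / Real.sqrt 2 ^ (a + 2)) * rsW 0 30 ⌈w⌉₊ true E / p)
        else 0 := by
  unfold richertMainTerm
  rw [rs_alphaMinus_tsum w z D E hw0 hwz]
  simp only [rs_alphaPlus_tsum w z _ E _ hw0 hwz]


lemma rsU_sum (n : ℕ) : ∑ k ∈ Finset.range n, (if k.Prime then (1 / (k : ℝ)) * ((rsV 0 k)⁻¹) ^ 9 else 0) ≤
    ((rsV 0 n)⁻¹) ^ 9 / 9 := by
  induction n with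
  | zero => simp [rsV_zero]
  | succ n ih =>
    rw [Finset.sum_range_succ]
    by_cases hp : n.Prime
    · rw [if_pos hp]
      have hV := rsV_pos 0 n
      have hn : (2 : ℝ) ≤ n := by exact_mod_cast hp.two_le
      have h1 : rsV 0 (n + 1) = rsV 0 n * (1 - 1 / n) := by
        rw [rsV_succ, if_pos ⟨hp, Nat.zero_le _⟩]; ring
      have h2 : 1 + 1 / (n : ℝ) ≤ (1 - 1 / (n : ℝ))⁻¹ := by
        have h0 : 0 < 1 - 1 / (n : ℝ) := by
          rw [sub_pos, div_lt_one (by linarith)]; linarith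
        rw [le_inv_comm₀ (by positivity) h0, inv_eq_one_div, le_div_iff₀ (by positivity)]
        have : (1 - 1 / (n : ℝ)) * (1 + 1 / n) = 1 - (1 / n) ^ 2 := by ring
        rw [this]
        have : 0 ≤ (1 / (n : ℝ)) ^ 2 := by positivity
        linarith
      rw [h1, mul_inv, mul_pow]
      have h3 : 1 + 9 * (1 / (n : ℝ)) ≤ ((1 - 1 / (n : ℝ))⁻¹) ^ 9 := by
        have h4 := one_add_mul_le_pow (a := 1 / (n : ℝ)) (by
          have : (0 : ℝ) ≤ 1 / n := by positivity
          linarith) 9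
        have h5 := pow_le_pow_left₀ (by positivity) h2 9
        push_cast at h4
        linarith
      have h6 : 0 < ((rsV 0 n)⁻¹) ^ 9 := by positivity
      have h7 := mul_le_mul_of_nonneg_left h3 h6.le
      linarith
    · rw [if_neg hp, rsV_succ, if_neg (fun h => hp h.1)]
      simpa using ih

lemma rs_FL : ∃ K : ℝ, 0 < K ∧ ∀ n : ℕ, ∀ E : ℝ, 1 < E →
    ((n : ℝ) ^ 29 ≤ E → rsW 0 30 n true E ≤ rsV 0 n + K * ((rsV 0 n)⁻¹) ^ 9 / (Real.log E) ^ 10) ∧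
    ((n : ℝ) ^ 30 ≤ E → rsV 0 n - K * ((rsV 0 n)⁻¹) ^ 9 / (Real.log E) ^ 10 ≤ rsW 0 30 n false E) := by
  obtain ⟨_, C, _, hC, hV⟩ := rsV_bounds
  set K : ℝ := 2 * (31 * C) ^ 10 with hK
  have hKpos : 0 < K := by positivity
  refine ⟨K, hKpos, ?_⟩
  intro n
  induction n using Nat.strong_induction_on with
  | _ n ih =>
  intro E hE
  have hL : 0 < Real.log E := Real.log_pos hE
  set L := Real.log E with hLdef
  have hUn : 0 < ((rsV 0 n)⁻¹) ^ 9 := by have := rsV_pos 0 n; positivity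
  constructor
  · intro hn
    rw [rsW_unroll]
    have key : ∀ k ∈ Finset.range n,
        (if k.Prime ∧ (k : ℝ) ^ 31 < E then 1 / (k : ℝ) * rsV 0 k else 0) -
          K * (31 / 30) ^ 10 / L ^ 10 * (if k.Prime then (1 / (k : ℝ)) * ((rsV 0 k)⁻¹) ^ 9 else 0) ≤
        (if k.Prime ∧ 0 ≤ k ∧ (true = true → (k : ℝ) ^ (30 + 1) < E) then
          (1 / (k : ℝ)) * rsW 0 30 k (!true) (E / k) else 0) := by
      intro k hk
      have hkn := Finset.mem_range.1 hk
      have hVk := rsV_pos 0 k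
      by_cases hp : k.Prime
      · by_cases hkE : (k : ℝ) ^ 31 < E
        · have hk2 : (2 : ℝ) ≤ k := by exact_mod_cast hp.two_le
          have hk0 : (0 : ℝ) < k := by linarith
          have h1 : (k : ℝ) ^ 30 ≤ E / k := by
            rw [le_div_iff₀ hk0, ← pow_succ]; exact hkE.le
          have h2 : 1 < E / k := lt_of_lt_of_le (one_lt_pow₀ (by linarith) (by norm_num)) h1
          have h3 := (ih k hkn (E / k) h2).2 h1
          have h4 : Real.log (E / k) = L - Real.log k := Real.log_div (by linarith) hk0.ne'
          have h5 : 31 * Real.log k ≤ L := by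
            have := Real.log_le_log (by positivity) hkE.le
            rw [Real.log_pow] at this
            exact_mod_cast this
          have h6 : 30 / 31 * L ≤ Real.log (E / k) := by rw [h4]; linarith
          have h7 : K * ((rsV 0 k)⁻¹) ^ 9 / (Real.log (E / k)) ^ 10 ≤
              K * ((rsV 0 k)⁻¹) ^ 9 / (30 / 31 * L) ^ 10 := by
            gcongr
          have h8 : K * ((rsV 0 k)⁻¹) ^ 9 / (30 / 31 * L) ^ 10 =
              K * (31 / 30) ^ 10 / L ^ 10 * ((rsV 0 k)⁻¹) ^ 9 := by
            field_simp
          rw [if_pos ⟨hp, hkE⟩, if_pos hp, if_pos ⟨hp, Nat.zero_le _, fun _ => hkE⟩]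
          have h9 : rsV 0 k - K * (31 / 30) ^ 10 / L ^ 10 * ((rsV 0 k)⁻¹) ^ 9 ≤ rsW 0 30 k (!true) (E / k) := by
            simp only [Bool.not_true]; linarith
          have := mul_le_mul_of_nonneg_left h9 (by positivity : (0 : ℝ) ≤ 1 / k)
          linarith
        · rw [if_neg (by tauto), if_pos hp, if_neg (fun h => hkE (h.2.2 rfl))]
          have : 0 ≤ K * (31 / 30) ^ 10 / L ^ 10 * (1 / (k : ℝ) * (rsV 0 k)⁻¹ ^ 9) := by positivity
          linarith
      · rw [if_neg (by tauto), if_neg (by tauto), if_neg (by tauto)]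
        simp
    have hsum := Finset.sum_le_sum key
    rw [Finset.sum_sub_distrib, ← Finset.mul_sum] at hsum
    have hU := mul_le_mul_of_nonneg_left (rsU_sum n)
      (by positivity : 0 ≤ K * (31 / 30) ^ 10 / L ^ 10)
    have hX : ∀ n : ℕ, (1 - ∑ k ∈ Finset.range n,
        (if k.Prime ∧ (k : ℝ) ^ 31 < E then 1 / (k : ℝ) * rsV 0 k else 0) = rsV 0 n) ∨
        ((1 - ∑ k ∈ Finset.range n,
        (if k.Prime ∧ (k : ℝ) ^ 31 < E then 1 / (k : ℝ) * rsV 0 k else 0) ≤ 31 * C / L) ∧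
          rsV 0 n ≤ 31 * C / L) := by
      intro n
      induction n with
      | zero => left; simp [rsV_zero]
      | succ n ihn =>
        rw [Finset.sum_range_succ, rsV_succ]
        have hVn := rsV_pos 0 n
        have hnn : 0 ≤ 1 / (n : ℝ) * rsV 0 n := by positivity
        rcases ihn with h | ⟨h, h'⟩
        · by_cases hp : n.Prime
          · by_cases hnE : (n : ℝ) ^ 31 < E
            · left
              rw [if_pos ⟨hp, hnE⟩, if_pos ⟨hp, Nat.zero_le _⟩]; linarith
            · right
              rw [if_neg (by tauto), if_pos ⟨hp, Nat.zero_le _⟩]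
              have h1 : rsV 0 n ≤ 31 * C / L := by
                refine (hV n hp.two_le).2.trans ?_
                have := Real.log_le_log (by linarith) (not_lt.1 hnE)
                rw [Real.log_pow] at this
                push_cast at this
                have hl := (rs_log_succ hp.two_le).1
                rw [div_le_div_iff₀ hl hL]
                nlinarith
              constructor <;> linarith
          · left
            rw [if_neg (by tauto), if_neg (by tauto)]; linarith
        · right
          constructor
          · split_ifs <;> linarith
          · split_ifs <;> linarith
    have hfin : K * (31 / 30) ^ 10 / L ^ 10 * ((rsV 0 n)⁻¹ ^ 9 / 9) ≤
        (1 / 2) * (K * ((rsV 0 n)⁻¹) ^ 9 / L ^ 10) := by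
      have e : K * (31 / 30) ^ 10 / L ^ 10 * ((rsV 0 n)⁻¹ ^ 9 / 9) =
        ((31 / 30) ^ 10 / 9) * (K * ((rsV 0 n)⁻¹) ^ 9 / L ^ 10) := by ring
      rw [e]
      apply mul_le_mul_of_nonneg_right _ (by positivity)
      norm_num
    have hpos : 0 < K * ((rsV 0 n)⁻¹) ^ 9 / L ^ 10 := by positivity
    rcases hX n with h | ⟨h, h'⟩
    · linarith
    · have h1 : (L / (31 * C)) ^ 9 ≤ ((rsV 0 n)⁻¹) ^ 9 := by
        apply pow_le_pow_left₀ (by positivity)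
        rw [le_inv_comm₀ (by positivity) (rsV_pos 0 n), inv_div]
        exact h'
      have h2 : 31 * C / L ≤ (1 / 2) * (K * ((rsV 0 n)⁻¹) ^ 9 / L ^ 10) := by
        calc 31 * C / L = (1 / 2) * (K * (L / (31 * C)) ^ 9 / L ^ 10) := by
              rw [hK]; field_simp
          _ ≤ _ := by gcongr
      have := rsV_pos 0 n
      linarith
  · intro hn
    rw [rsW_unroll, rsV_unroll]
    have key : ∀ k ∈ Finset.range n,
        (if k.Prime ∧ 0 ≤ k ∧ (false = true → (k : ℝ) ^ (30 + 1) < E) then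
          (1 / (k : ℝ)) * rsW 0 30 k (!false) (E / k) else 0) ≤
        (if k.Prime ∧ 0 ≤ k then 1 / (k : ℝ) * rsV 0 k else 0) +
          K * (30 / 29) ^ 10 / L ^ 10 * (if k.Prime then (1 / (k : ℝ)) * ((rsV 0 k)⁻¹) ^ 9 else 0) := by
      intro k hk
      have hkn := Finset.mem_range.1 hk
      have hVk := rsV_pos 0 k
      by_cases hp : k.Prime
      · have hk2 : (2 : ℝ) ≤ k := by exact_mod_cast hp.two_le
        have hk0 : (0 : ℝ) < k := by linarith
        have hkE : (k : ℝ) ^ 30 ≤ E := by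
          refine le_trans ?_ hn
          have : (k : ℝ) ≤ n := by exact_mod_cast hkn.le
          gcongr
        have h1 : (k : ℝ) ^ 29 ≤ E / k := by
          rw [le_div_iff₀ hk0, ← pow_succ]; exact hkE
        have h2 : 1 < E / k := lt_of_lt_of_le (one_lt_pow₀ (by linarith) (by norm_num)) h1
        have h3 := (ih k hkn (E / k) h2).1 h1
        have h4 : Real.log (E / k) = L - Real.log k := Real.log_div (by linarith) hk0.ne'
        have h5 : 30 * Real.log k ≤ L := by
          have := Real.log_le_log (by positivity) hkE
          rw [Real.log_pow] at this
          exact_mod_cast this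
        have h6 : 29 / 30 * L ≤ Real.log (E / k) := by rw [h4]; linarith
        have h7 : K * ((rsV 0 k)⁻¹) ^ 9 / (Real.log (E / k)) ^ 10 ≤
            K * ((rsV 0 k)⁻¹) ^ 9 / (29 / 30 * L) ^ 10 := by
          gcongr
        have h8 : K * ((rsV 0 k)⁻¹) ^ 9 / (29 / 30 * L) ^ 10 =
            K * (30 / 29) ^ 10 / L ^ 10 * ((rsV 0 k)⁻¹) ^ 9 := by
          field_simp
        rw [if_pos ⟨hp, Nat.zero_le _, fun h => by simp at h⟩, if_pos ⟨hp, Nat.zero_le _⟩, if_pos hp]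
        have h9 : rsW 0 30 k (!false) (E / k) ≤ rsV 0 k + K * (30 / 29) ^ 10 / L ^ 10 * ((rsV 0 k)⁻¹) ^ 9 := by
          simp only [Bool.not_false]; linarith
        have := mul_le_mul_of_nonneg_left h9 (by positivity : (0 : ℝ) ≤ 1 / k)
        linarith
      · rw [if_neg (by tauto), if_neg (by tauto), if_neg (by tauto)]
        simp
    have hsum := Finset.sum_le_sum key
    rw [Finset.sum_add_distrib, ← Finset.mul_sum] at hsum
    have hU := mul_le_mul_of_nonneg_left (rsU_sum n)
      (by positivity : 0 ≤ K * (30 / 29) ^ 10 / L ^ 10)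
    have hfin : K * (30 / 29) ^ 10 / L ^ 10 * ((rsV 0 n)⁻¹ ^ 9 / 9) ≤
        (1 / 2) * (K * ((rsV 0 n)⁻¹) ^ 9 / L ^ 10) := by
      have e : K * (30 / 29) ^ 10 / L ^ 10 * ((rsV 0 n)⁻¹ ^ 9 / 9) =
        ((30 / 29) ^ 10 / 9) * (K * ((rsV 0 n)⁻¹) ^ 9 / L ^ 10) := by ring
      rw [e]
      apply mul_le_mul_of_nonneg_right _ (by positivity)
      norm_num
    have hpos : 0 < K * ((rsV 0 n)⁻¹) ^ 9 / L ^ 10 := by positivity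
    have hun := rsV_unroll 0 n
    rw [← hun]
    linarith


noncomputable def rsSeq : ℕ → (ℝ → ℝ) × (ℝ → ℝ)
  | 0 => (fun s => 1 / max s 1, fun _ => 0)
  | n + 1 => (fun s => (1 + ∫ t in (2 : ℝ)..(s - 1), (rsSeq n).2 t) / max s 1,
              fun s => (∫ t in (1 : ℝ)..(max s 2 - 1), (rsSeq n).1 t) / max s 1)

lemma rs_max_ne (s : ℝ) : max s 1 ≠ 0 := by
  have : (1 : ℝ) ≤ max s 1 := le_max_right _ _
  linarith

lemma rsSeq_cont (n : ℕ) : Continuous (rsSeq n).1 ∧ Continuous (rsSeq n).2 := by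
  induction n with
  | zero =>
    refine ⟨?_, ?_⟩
    · exact Continuous.div continuous_const (continuous_id.max continuous_const) rs_max_ne
    · exact continuous_const
  | succ n ih =>
    refine ⟨?_, ?_⟩
    · refine Continuous.div ?_ (continuous_id.max continuous_const) rs_max_ne
      refine continuous_const.add ?_
      exact (intervalIntegral.continuous_primitive (fun a b => ih.2.intervalIntegrable a b) 2).comp
        (continuous_id.sub continuous_const)
    · refine Continuous.div ?_ (continuous_id.max continuous_const) rs_max_ne
      exact (intervalIntegral.continuous_primitive (fun a b => ih.1.intervalIntegrable a b) 1).comp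
        ((continuous_id.max continuous_const).sub continuous_const)

lemma rsSeq_step (n : ℕ) : ∀ s : ℝ, s ≤ n + 2 → (rsSeq (n + 1)).1 s = (rsSeq n).1 s ∧
    (rsSeq (n + 1)).2 s = (rsSeq n).2 s := by
  induction n with
  | zero =>
    intro s hs
    norm_num at hs
    constructor
    · simp [rsSeq]
    · simp [rsSeq, max_eq_right hs]
      norm_num
  | succ n ih =>
    intro s hs
    push_cast at hs
    constructor
    · rw [rsSeq, rsSeq]
      simp only
      congr 2
      apply intervalIntegral.integral_congr
      intro t ht
      apply (ih t _).2
      have := (Set.mem_uIcc.1 ht)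
      have hn : (0 : ℝ) ≤ n := Nat.cast_nonneg n
      rcases this with h | h <;> linarith
    · rw [rsSeq, rsSeq]
      simp only
      congr 1
      apply intervalIntegral.integral_congr
      intro t ht
      apply (ih t _).1
      have := (Set.mem_uIcc.1 ht)
      have hn : (0 : ℝ) ≤ n := Nat.cast_nonneg n
      have hm : max s 2 ≤ n + 3 := max_le (by linarith) (by linarith)
      rcases this with h | h <;> linarith

lemma rsSeq_stable (n : ℕ) (j : ℕ) : ∀ s : ℝ, s ≤ n + 2 → (rsSeq (n + j)).1 s = (rsSeq n).1 s ∧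
    (rsSeq (n + j)).2 s = (rsSeq n).2 s := by
  induction j with
  | zero => intro s _; exact ⟨rfl, rfl⟩
  | succ j ih =>
    intro s hs
    have h1 := ih s hs
    have h2 := rsSeq_step (n + j) s (by push_cast; have : (0 : ℝ) ≤ j := Nat.cast_nonneg j; linarith)
    rw [← h1.1, ← h1.2]
    exact h2

noncomputable def rsF (s : ℝ) : ℝ := (rsSeq ⌈s⌉₊).1 s
noncomputable def rsf (s : ℝ) : ℝ := (rsSeq ⌈s⌉₊).2 s

lemma rsF_eq_seq (n : ℕ) (s : ℝ) (hs : s ≤ n + 2) : rsF s = (rsSeq n).1 s ∧ rsf s = (rsSeq n).2 s := by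
  unfold rsF rsf
  have h0 : s ≤ ⌈s⌉₊ := Nat.le_ceil s
  rcases le_total n ⌈s⌉₊ with h | h
  · obtain ⟨j, hj⟩ := Nat.exists_eq_add_of_le h
    rw [hj]
    exact rsSeq_stable n j s hs
  · obtain ⟨j, hj⟩ := Nat.exists_eq_add_of_le h
    rw [hj]
    have := rsSeq_stable ⌈s⌉₊ j s (by linarith)
    exact ⟨this.1.symm, this.2.symm⟩

lemma rsF_cont : Continuous rsF := by
  rw [continuous_iff_continuousAt]
  intro s
  obtain ⟨n, hn⟩ := exists_nat_gt s
  refine ((rsSeq_cont n).1.continuousAt (x := s)).congr ?_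
  filter_upwards [Iio_mem_nhds hn] with x hx
  exact (rsF_eq_seq n x (by have : x < n := hx; linarith)).1.symm

lemma rsf_cont : Continuous rsf := by
  rw [continuous_iff_continuousAt]
  intro s
  obtain ⟨n, hn⟩ := exists_nat_gt s
  refine ((rsSeq_cont n).2.continuousAt (x := s)).congr ?_
  filter_upwards [Iio_mem_nhds hn] with x hx
  exact (rsF_eq_seq n x (by have : x < n := hx; linarith)).2.symm

lemma rsF_eq (s : ℝ) : rsF s = (1 + ∫ t in (2 : ℝ)..(s - 1), rsf t) / max s 1 := by
  obtain ⟨n, hn⟩ := exists_nat_gt s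
  have h0 : (0 : ℝ) ≤ n := Nat.cast_nonneg n
  rw [(rsF_eq_seq (n + 1) s (by push_cast; linarith)).1, rsSeq]
  simp only
  congr 2
  apply intervalIntegral.integral_congr
  intro t ht
  refine (rsF_eq_seq n t ?_).2.symm
  rcases Set.mem_uIcc.1 ht with h | h <;> linarith

lemma rsf_eq (s : ℝ) : rsf s = (∫ t in (1 : ℝ)..(max s 2 - 1), rsF t) / max s 1 := by
  obtain ⟨n, hn⟩ := exists_nat_gt s
  have h0 : (0 : ℝ) ≤ n := Nat.cast_nonneg n
  rw [(rsF_eq_seq (n + 1) s (by push_cast; linarith)).2, rsSeq]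
  simp only
  congr 1
  apply intervalIntegral.integral_congr
  intro t ht
  refine (rsF_eq_seq n t ?_).1.symm
  have hm : max s 2 ≤ n + 2 := max_le (by linarith) (by linarith)
  rcases Set.mem_uIcc.1 ht with h | h <;> linarith

noncomputable def rsA (s : ℝ) : ℝ := 1 + ∫ t in (2 : ℝ)..(s - 1), rsf t
noncomputable def rsa (s : ℝ) : ℝ := ∫ t in (1 : ℝ)..(max s 2 - 1), rsF t

lemma rsF_eq_A {s : ℝ} (hs : 1 ≤ s) : rsF s = rsA s / s := by
  rw [rsF_eq, max_eq_left hs]; rfl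
lemma rsf_eq_a {s : ℝ} (hs : 1 ≤ s) : rsf s = rsa s / s := by
  rw [rsf_eq, max_eq_left hs]; rfl

lemma rsa_zero {s : ℝ} (hs : s ≤ 2) : rsa s = 0 := by
  unfold rsa; rw [max_eq_right hs]; norm_num

lemma rsf_zero {s : ℝ} (hs : s ≤ 2) : rsf s = 0 := by
  rw [rsf_eq]; change rsa s / _ = 0; rw [rsa_zero hs, zero_div]

lemma rsA_one {s : ℝ} (hs : s ≤ 3) : rsA s = 1 := by
  unfold rsA
  rw [intervalIntegral.integral_congr (g := fun _ => (0 : ℝ))]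
  · simp
  · intro t ht
    apply rsf_zero
    rcases Set.mem_uIcc.1 ht with h | h <;> linarith

lemma rsF_inv {s : ℝ} (h1 : 1 ≤ s) (hs : s ≤ 3) : rsF s = 1 / s := by
  rw [rsF_eq_A h1, rsA_one hs]

lemma rsA_diff (x y : ℝ) : rsA y - rsA x = ∫ t in (x - 1)..(y - 1), rsf t := by
  unfold rsA
  have := intervalIntegral.integral_interval_sub_left (μ := MeasureTheory.volume) (a := 2) (rsf_cont.intervalIntegrable 2 (y - 1))
    (rsf_cont.intervalIntegrable 2 (x - 1))
  linarith

lemma rsa_diff {x y : ℝ} (hx : 2 ≤ x) (hy : 2 ≤ y) :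
    rsa y - rsa x = ∫ t in (x - 1)..(y - 1), rsF t := by
  unfold rsa
  rw [max_eq_left hx, max_eq_left hy]
  exact intervalIntegral.integral_interval_sub_left (μ := MeasureTheory.volume) (a := 1) (rsF_cont.intervalIntegrable 1 (y - 1))
    (rsF_cont.intervalIntegrable 1 (x - 1))

lemma rsA_deriv (s : ℝ) : HasDerivAt rsA (rsf (s - 1)) s := by
  have h1 : HasDerivAt (fun x => ∫ t in (2 : ℝ)..x, rsf t) (rsf (s - 1)) (s - 1) :=
    intervalIntegral.integral_hasDerivAt_right (rsf_cont.intervalIntegrable _ _)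
      (rsf_cont.stronglyMeasurableAtFilter _ _) rsf_cont.continuousAt
  have h2 := h1.comp s ((hasDerivAt_id s).sub_const 1)
  simp only [mul_one] at h2
  exact h2.const_add 1

lemma rsa_deriv {s : ℝ} (hs : 2 < s) : HasDerivAt rsa (rsF (s - 1)) s := by
  have h1 : HasDerivAt (fun x => ∫ t in (1 : ℝ)..x, rsF t) (rsF (s - 1)) (s - 1) :=
    intervalIntegral.integral_hasDerivAt_right (rsF_cont.intervalIntegrable _ _)
      (rsF_cont.stronglyMeasurableAtFilter _ _) rsF_cont.continuousAt
  have h2 := h1.comp s ((hasDerivAt_id s).sub_const 1)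
  simp only [mul_one] at h2
  refine h2.congr_of_eventuallyEq ?_
  filter_upwards [Ioi_mem_nhds hs] with x hx
  have hx' : 2 < x := hx
  simp [rsa, max_eq_left hx'.le]

lemma rsA_cont : Continuous rsA := by
  rw [continuous_iff_continuousAt]
  exact fun s => (rsA_deriv s).continuousAt

lemma rsa_cont : Continuous rsa := 
  (intervalIntegral.continuous_primitive (fun a b => rsF_cont.intervalIntegrable a b) 1).comp
        ((continuous_id.max continuous_const).sub continuous_const)

noncomputable def rsq (s : ℝ) : ℝ := rsA s - rsa s

lemma rsq_cont : Continuous rsq := rsA_cont.sub rsa_cont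

lemma rsq_deriv {s : ℝ} (hs : 2 < s) : HasDerivAt rsq (- (rsq (s - 1) / (s - 1))) s := by
  have := (rsA_deriv s).sub (rsa_deriv hs)
  rw [rsF_eq_A (by linarith), rsf_eq_a (by linarith)] at this
  refine this.congr_deriv ?_
  unfold rsq
  ring

lemma rsq_one {s : ℝ} (hs : s ≤ 2) : rsq s = 1 := by
  unfold rsq; rw [rsA_one (by linarith), rsa_zero hs]; ring

lemma rsq_id {s : ℝ} (hs : 2 ≤ s) : (s - 1) * rsq s = ∫ t in (s - 1)..s, rsq t := by
  set Φ : ℝ → ℝ := fun s => (s - 1) * rsq s - ((∫ t in (1 : ℝ)..s, rsq t) - ∫ t in (1 : ℝ)..(s - 1), rsq t) with hΦ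
  have hprim : Continuous (fun x => ∫ t in (1 : ℝ)..x, rsq t) :=
    intervalIntegral.continuous_primitive (fun a b => rsq_cont.intervalIntegrable a b) 1
  have hprimd : ∀ x, HasDerivAt (fun x => ∫ t in (1 : ℝ)..x, rsq t) (rsq x) x := fun x =>
    intervalIntegral.integral_hasDerivAt_right (rsq_cont.intervalIntegrable _ _)
      (rsq_cont.stronglyMeasurableAtFilter _ _) rsq_cont.continuousAt
  have hcont : Continuous Φ :=
    ((continuous_id.sub continuous_const).mul rsq_cont).sub
      (hprim.sub (hprim.comp (continuous_id.sub continuous_const)))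
  have hder : ∀ x ∈ Set.Ioi (2 : ℝ), HasDerivAt Φ 0 x := by
    intro x hx
    have hx' : 2 < x := hx
    have h1 := (((hasDerivAt_id x).sub_const 1).mul (rsq_deriv hx')).sub
      ((hprimd x).sub ((hprimd (x - 1)).comp x ((hasDerivAt_id x).sub_const 1)))
    refine h1.congr_deriv ?_
    have : x - 1 ≠ 0 := by linarith
    simp
    field_simp
    ring
  have hconst : Φ s = Φ 2 := by
    rcases hs.eq_or_lt with h | h
    · rw [h]
    · obtain ⟨c, _, hc⟩ := exists_hasDerivAt_eq_slope Φ (fun _ => 0) h hcont.continuousOn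
        (fun x hx => hder x hx.1)
      have : s - 2 ≠ 0 := by linarith
      rw [eq_comm, div_eq_zero_iff] at hc
      rcases hc with hc | hc
      · linarith
      · exact absurd hc this
  have h2 : Φ 2 = 0 := by
    simp only [hΦ]
    rw [intervalIntegral.integral_congr (g := fun _ => (1 : ℝ)), intervalIntegral.integral_congr (a := 1) (b := 2 - 1) (g := fun _ => (1 : ℝ)), rsq_one le_rfl]
    · norm_num
    · intro t ht
      rcases Set.mem_uIcc.1 ht with h | h <;> exact rsq_one (by linarith)
    · intro t ht
      rcases Set.mem_uIcc.1 ht with h | h <;> exact rsq_one (by linarith)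
  rw [h2] at hconst
  have h3 := intervalIntegral.integral_interval_sub_left (μ := MeasureTheory.volume) (a := 1) (rsq_cont.intervalIntegrable 1 s)
    (rsq_cont.intervalIntegrable 1 (s - 1))
  simp only [hΦ] at hconst
  linarith

lemma rsq_pos (s : ℝ) : 0 < rsq s := by
  by_contra hneg
  have hs2 : 2 < s := by
    by_contra h
    rw [rsq_one (by linarith)] at hneg
    norm_num at hneg
  have hcomp : IsCompact (Set.Icc 2 s ∩ rsq ⁻¹' Set.Iic 0) :=
    isCompact_Icc.inter_right (isClosed_Iic.preimage rsq_cont)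
  obtain ⟨x, ⟨⟨⟨hx2, hxs⟩, hx0⟩, hmin⟩⟩ := hcomp.exists_isLeast ⟨s, ⟨⟨hs2.le, le_rfl⟩, not_lt.1 hneg⟩⟩
  have hx0' : rsq x ≤ 0 := hx0
  have hpos : ∀ t, t < x → 0 < rsq t := by
    intro t ht
    by_contra h
    rcases le_or_gt t 2 with h2 | h2
    · rw [rsq_one h2] at h; norm_num at h
    · have := hmin (a := t) ⟨⟨h2.le, by linarith⟩, not_lt.1 h⟩
      linarith
  have h1 := rsq_id hx2
  have h2 : 0 < ∫ t in (x - 1)..x, rsq t :=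
    intervalIntegral.intervalIntegral_pos_of_pos_on (rsq_cont.intervalIntegrable _ _)
      (fun t ht => hpos t ht.2) (by linarith)
  nlinarith

lemma rsF_deriv {s : ℝ} (hs : 1 < s) : HasDerivAt rsF (- ((rsF s - rsf (s - 1)) / s)) s := by
  have h1 : HasDerivAt (fun x => rsA x / x) _ s := (rsA_deriv s).div (hasDerivAt_id s) (by simp; linarith)
  have h2 := h1.congr_of_eventuallyEq (f₁ := rsF) (by
    filter_upwards [Ioi_mem_nhds hs] with x hx
    exact rsF_eq_A (le_of_lt hx))
  refine h2.congr_deriv ?_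
  rw [rsF_eq_A hs.le]
  have : s ≠ 0 := by linarith
  field_simp
  ring

lemma rsf_deriv {s : ℝ} (hs : 2 < s) : HasDerivAt rsf ((rsF (s - 1) - rsf s) / s) s := by
  have h1 : HasDerivAt (fun x => rsa x / x) _ s := (rsa_deriv hs).div (hasDerivAt_id s) (by simp; linarith)
  have h2 := h1.congr_of_eventuallyEq (f₁ := rsf) (by
    filter_upwards [Ioi_mem_nhds hs] with x hx
    have : 2 < x := hx
    exact rsf_eq_a (by linarith))
  refine h2.congr_deriv ?_
  rw [rsf_eq_a (s := s) (by linarith)]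
  have : s ≠ 0 := by linarith
  field_simp

lemma rsF_anti_of {T : ℝ} (h : ∀ s, 1 < s → s < T → 0 ≤ rsF s - rsf (s - 1)) :
    AntitoneOn rsF (Set.Icc 1 T) := by
  apply antitoneOn_of_hasDerivWithinAt_nonpos (convex_Icc 1 T) rsF_cont.continuousOn
    (f' := fun s => - ((rsF s - rsf (s - 1)) / s))
  · intro s hs
    rw [interior_Icc] at hs
    exact (rsF_deriv hs.1).hasDerivWithinAt
  · intro s hs
    rw [interior_Icc] at hs
    have := div_nonneg (h s hs.1 hs.2) (by linarith [hs.1] : 0 ≤ s)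
    linarith

lemma rsf_mono_of {T : ℝ} (h : ∀ s, 2 < s → s < T → 0 ≤ rsF (s - 1) - rsf s) :
    MonotoneOn rsf (Set.Icc 2 T) := by
  apply monotoneOn_of_hasDerivWithinAt_nonneg (convex_Icc 2 T) rsf_cont.continuousOn
    (f' := fun s => (rsF (s - 1) - rsf s) / s)
  · intro s hs
    rw [interior_Icc] at hs
    exact (rsf_deriv hs.1).hasDerivWithinAt
  · intro s hs
    rw [interior_Icc] at hs
    exact div_nonneg (h s hs.1 hs.2) (by linarith [hs.1] : 0 ≤ s)

lemma rsF_sub_f {s : ℝ} (hs : 1 ≤ s) : rsF s - rsf s = rsq s / s := by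
  rw [rsF_eq_A hs, rsf_eq_a hs, rsq]; ring

lemma rs_gk {s : ℝ} (hs : 2 ≤ s) : 0 < min (rsF s - rsf (s - 1)) (rsF (s - 1) - rsf s) := by
  by_contra hneg
  set H : ℝ → ℝ := fun s => min (rsF s - rsf (s - 1)) (rsF (s - 1) - rsf s) with hH
  have hHc : Continuous H := by
    have e : Continuous (fun s : ℝ => s - 1) := continuous_id.sub continuous_const
    exact (rsF_cont.sub (rsf_cont.comp e)).min ((rsF_cont.comp e).sub rsf_cont)
  have hcomp : IsCompact (Set.Icc 2 s ∩ H ⁻¹' Set.Iic 0) :=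
    isCompact_Icc.inter_right (isClosed_Iic.preimage hHc)
  obtain ⟨x, ⟨⟨⟨hx2, hxs⟩, hx0⟩, hmin⟩⟩ := hcomp.exists_isLeast ⟨s, ⟨⟨hs, le_rfl⟩, not_lt.1 hneg⟩⟩
  have hpos : ∀ t, 2 ≤ t → t < x → 0 < H t := by
    intro t ht htx
    by_contra h
    have := hmin (a := t) ⟨⟨ht, by linarith⟩, not_lt.1 h⟩
    linarith
  have hFa : AntitoneOn rsF (Set.Icc 1 x) := by
    apply rsF_anti_of
    intro t ht htx
    rcases le_or_gt 2 t with h | h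
    · exact (lt_of_lt_of_le (hpos t h htx) (min_le_left _ _)).le
    · rw [rsF_inv ht.le (by linarith), rsf_zero (by linarith), sub_zero]
      positivity
  have hfm : MonotoneOn rsf (Set.Icc 2 x) := by
    apply rsf_mono_of
    intro t ht htx
    exact (lt_of_lt_of_le (hpos t ht.le htx) (min_le_right _ _)).le
  have hq : 0 < rsq x / x := div_pos (rsq_pos x) (by linarith)
  rw [← rsF_sub_f (by linarith)] at hq
  have hk : 0 < rsF (x - 1) - rsf x := by
    have := hFa (a := x - 1) ⟨by linarith, by linarith⟩ (b := x) ⟨by linarith, le_rfl⟩ (by linarith)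
    linarith
  have hg : 0 < rsF x - rsf (x - 1) := by
    rcases le_or_gt x 3 with h | h
    · rw [rsF_inv (by linarith) h, rsf_zero (by linarith), sub_zero]
      positivity
    · have := hfm (a := x - 1) ⟨by linarith, by linarith⟩ (b := x) ⟨by linarith, le_rfl⟩ (by linarith)
      linarith
  have : 0 < H x := lt_min hg hk
  have : H x ≤ 0 := hx0
  linarith

lemma rsF_anti {x y : ℝ} (hx : 1 ≤ x) (hxy : x ≤ y) : rsF y ≤ rsF x := by
  refine rsF_anti_of (T := y) ?_ ⟨hx, hxy⟩ ⟨hx.trans hxy, le_rfl⟩ hxy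
  intro t ht htx
  rcases le_or_gt 2 t with h | h
  · exact (lt_of_lt_of_le (rs_gk h) (min_le_left _ _)).le
  · rw [rsF_inv ht.le (by linarith), rsf_zero (by linarith), sub_zero]
    positivity

lemma rsf_nonneg (x : ℝ) : 0 ≤ rsf x := by
  rcases le_or_gt x 2 with h | h
  · rw [rsf_zero h]
  · have := rsf_mono_of (T := x) (fun t ht _ => (lt_of_lt_of_le (rs_gk ht.le) (min_le_right _ _)).le)
      (a := 2) ⟨le_rfl, h.le⟩ (b := x) ⟨h.le, le_rfl⟩ h.le
    rwa [rsf_zero le_rfl] at this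

lemma rsf_mono {x y : ℝ} (hxy : x ≤ y) : rsf x ≤ rsf y := by
  rcases le_or_gt x 2 with h | h
  · rw [rsf_zero h]; exact rsf_nonneg y
  · exact rsf_mono_of (T := y) (fun t ht _ => (lt_of_lt_of_le (rs_gk ht.le) (min_le_right _ _)).le)
      ⟨h.le, hxy⟩ ⟨h.le.trans hxy, le_rfl⟩ hxy

lemma rsf_lt_F {x : ℝ} (hx : 1 ≤ x) : rsf x < rsF x := by
  have := div_pos (rsq_pos x) (by linarith : 0 < x)
  rw [← rsF_sub_f hx] at this
  linarith

lemma rsF_pos {x : ℝ} (hx : 1 ≤ x) : 0 < rsF x := lt_of_le_of_lt (rsf_nonneg x) (rsf_lt_F hx)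

lemma rsf_le_F {x y : ℝ} (hx : 1 ≤ x) (hy : 1 ≤ y) : rsf y ≤ rsF x := by
  rcases le_total x y with h | h
  · exact (rsf_lt_F hy).le.trans (rsF_anti hx h)
  · exact (rsf_mono h).trans (rsf_lt_F hx).le

lemma rsa_log {s : ℝ} (h2 : 2 ≤ s) (h4 : s ≤ 4) : rsa s = Real.log (s - 1) := by
  unfold rsa
  rw [max_eq_left h2, intervalIntegral.integral_congr (g := fun t => 1 / t)]
  · rw [integral_one_div (by
      intro h
      rcases Set.mem_uIcc.1 h with h | h <;> linarith)]
    simp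
  · intro t ht
    rcases Set.mem_uIcc.1 ht with h | h <;> exact rsF_inv (by linarith) (by linarith)

/-- the separating constant -/
lemma rs_c0 : ∃ c0 : ℝ, 0 < c0 ∧ c0 ≤ 1 ∧ (∀ s, 1 ≤ s → rsf s ≤ c0) ∧ ∀ s, 1 ≤ s → c0 ≤ rsF s := by
  have hbdd : BddBelow (rsF '' Set.Ici 1) := ⟨0, by
    rintro _ ⟨x, hx, rfl⟩
    exact (rsF_pos hx).le⟩
  have hle : ∀ s, 1 ≤ s → rsf s ≤ sInf (rsF '' Set.Ici 1) := by
    intro s hs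
    apply le_csInf ⟨rsF 1, Set.mem_image_of_mem _ (Set.mem_Ici.2 le_rfl)⟩
    rintro _ ⟨x, hx, rfl⟩
    exact rsf_le_F hx hs
  refine ⟨sInf (rsF '' Set.Ici 1), ?_, ?_, hle, ?_⟩
  · refine lt_of_lt_of_le ?_ (hle 3 (by norm_num))
    rw [rsf_eq_a (by norm_num), rsa_log (by norm_num) (by norm_num)]
    have : 0 < Real.log (3 - 1) := Real.log_pos (by norm_num)
    positivity
  · refine (csInf_le hbdd (Set.mem_image_of_mem _ (Set.mem_Ici.2 (le_refl (1 : ℝ))))).trans ?_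
    rw [rsF_inv le_rfl (by norm_num)]; norm_num
  · intro s hs
    exact csInf_le hbdd ⟨s, hs, rfl⟩

lemma rsA_incr {x y : ℝ} (hxy : x ≤ y) :
    (y - x) * rsf (x - 1) ≤ rsA y - rsA x ∧ rsA y - rsA x ≤ (y - x) * rsf (y - 1) := by
  rw [rsA_diff]
  constructor
  · have := intervalIntegral.integral_mono_on (a := x - 1) (b := y - 1) (by linarith)
      (continuous_const (y := rsf (x - 1)) |>.intervalIntegrable (μ := MeasureTheory.volume) _ _) (rsf_cont.intervalIntegrable _ _)
      (fun t ht => rsf_mono ht.1)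
    rw [intervalIntegral.integral_const, smul_eq_mul] at this
    linarith
  · have := intervalIntegral.integral_mono_on (a := x - 1) (b := y - 1) (by linarith)
      (rsf_cont.intervalIntegrable _ _) (continuous_const (y := rsf (y - 1)) |>.intervalIntegrable (μ := MeasureTheory.volume) _ _)
      (fun t ht => rsf_mono ht.2)
    rw [intervalIntegral.integral_const, smul_eq_mul] at this
    linarith

lemma rsa_incr {x y : ℝ} (hx : 2 ≤ x) (hxy : x ≤ y) :
    (y - x) * rsF (y - 1) ≤ rsa y - rsa x ∧ rsa y - rsa x ≤ (y - x) * rsF (x - 1) := by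
  rw [rsa_diff hx (hx.trans hxy)]
  constructor
  · have := intervalIntegral.integral_mono_on (a := x - 1) (b := y - 1) (by linarith)
      (continuous_const (y := rsF (y - 1)) |>.intervalIntegrable (μ := MeasureTheory.volume) _ _) (rsF_cont.intervalIntegrable _ _)
      (fun t ht => rsF_anti (by linarith [ht.1]) ht.2)
    rw [intervalIntegral.integral_const, smul_eq_mul] at this
    linarith
  · have := intervalIntegral.integral_mono_on (a := x - 1) (b := y - 1) (by linarith)
      (rsF_cont.intervalIntegrable _ _) (continuous_const (y := rsF (x - 1)) |>.intervalIntegrable (μ := MeasureTheory.volume) _ _)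
      (fun t ht => rsF_anti (by linarith [ht.1]) ht.1)
    rw [intervalIntegral.integral_const, smul_eq_mul] at this
    linarith


lemma rs_sum_C2 : ∃ C : ℝ, 0 < C ∧ ∀ (N m : ℕ) (D : ℝ), 2 ≤ m → 1 ≤ N → (m : ℝ) ≤ D → Real.log D ≤ N * Real.log m →
    ∀ S : Finset ℕ, (∀ k ∈ S, m ≤ k ∧ (k : ℝ) ≤ D) → ∑ k ∈ S, rsC2 k ≤ Real.log N + C := by
  obtain ⟨C, hC, h⟩ := rs_mertens2
  have hl2 : 0 < Real.log 2 := Real.log_pos (by norm_num)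
  refine ⟨C / Real.log 2 + 1, by positivity, ?_⟩
  intro N m D hm hN hmD hD S hS
  have hD0 : 0 ≤ D := le_trans (Nat.cast_nonneg m) hmD
  have hfl : m ≤ ⌊D⌋₊ := Nat.le_floor hmD
  have hsub : S ⊆ Finset.Ico m (⌊D⌋₊ + 1) := by
    intro k hk
    rw [Finset.mem_Ico]
    exact ⟨(hS k hk).1, Nat.lt_succ_of_le (Nat.le_floor (hS k hk).2)⟩
  refine (Finset.sum_le_sum_of_subset_of_nonneg hsub (fun k _ _ => rsC2_nonneg k)).trans ?_
  have h1 := (abs_le.1 (h m ⌊D⌋₊ hm hfl).2).2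
  have hlm := (rs_log_succ hm).1
  have h2l : Real.log 2 ≤ Real.log m := by exact_mod_cast rs_log_mono (le_refl 2) hm
  have h3 : C / Real.log m ≤ C / Real.log 2 := by gcongr
  have hlf : Real.log m ≤ Real.log ⌊D⌋₊ := rs_log_mono hm hfl
  have h4 : Real.log (Real.log ⌊D⌋₊) ≤ Real.log N + Real.log (Real.log m) := by
    rw [← Real.log_mul (by positivity) hlm.ne']
    apply Real.log_le_log (by linarith)
    refine le_trans (Real.log_le_log ?_ (Nat.floor_le hD0)) hD
    exact_mod_cast (by omega : 0 < ⌊D⌋₊)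
  linarith

lemma rsW_unroll' (m β n : ℕ) (b : Bool) (D : ℝ) : rsW m β n b D = 1 - ∑ k ∈ Finset.Ico m n,
      if k.Prime ∧ (b = true → (k : ℝ) ^ (β + 1) < D) then
        (1 / (k : ℝ)) * rsW m β k (!b) (D / k) else 0 := by
  rw [rsW_unroll]
  congr 1
  have hsub : Finset.Ico m n ⊆ Finset.range n := by
    intro k hk
    rw [Finset.mem_Ico] at hk
    exact Finset.mem_range.2 hk.2
  rw [← Finset.sum_subset hsub]
  · apply Finset.sum_congr rfl
    intro k hk
    have := (Finset.mem_Ico.1 hk).1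
    simp only [this, true_and]
  · intro k hk hk2
    rw [Finset.mem_range] at hk
    rw [Finset.mem_Ico] at hk2
    rw [if_neg]
    tauto

set_option maxHeartbeats 1600000 in
lemma rs_linear (c0 : ℝ) (hc0 : 0 < c0) (hc1 : ∀ s, 1 ≤ s → rsf s ≤ c0) (hc2 : ∀ s, 1 ≤ s → c0 ≤ rsF s)
    (N : ℕ) : ∀ ε : ℝ, 0 < ε → ∃ m0 : ℕ, 2 ≤ m0 ∧ ∀ m : ℕ, m0 ≤ m → ∀ n : ℕ, m ≤ n → ∀ D : ℝ, (m : ℝ) ≤ D →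
      Real.log D ≤ N * Real.log m →
      (rsW m 2 n true D ≤ rsA (Real.log D / Real.log n) * Real.log m / (c0 * Real.log D) + ε) ∧
      ((n : ℝ) ^ 2 ≤ D →
        rsa (Real.log D / Real.log n) * Real.log m / (c0 * Real.log D) - ε ≤ rsW m 2 n false D) := by
  obtain ⟨C2, hC2, hsumC2⟩ := rs_sum_C2
  obtain ⟨C3, hC3, hM3⟩ := rs_mertens3
  induction N with
  | zero =>
    intro ε hε
    refine ⟨2, le_rfl, ?_⟩
    intro m hm n hn D hmD hD
    have hlm := (rs_log_succ hm).1
    have := Real.log_le_log (by exact_mod_cast (by omega : 0 < m)) hmD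
    push_cast at hD
    linarith
  | succ N ih =>
    intro ε hε
    set B : ℝ := Real.log ((N + 1 : ℕ) : ℝ) + C2 with hB
    have hBpos : 0 < B := by
      have : 0 ≤ Real.log ((N + 1 : ℕ) : ℝ) := Real.log_natCast_nonneg _
      linarith
    obtain ⟨m1, hm1, hmain⟩ := ih (ε / (2 * B)) (by positivity)
    obtain ⟨m2, hm2⟩ := exists_nat_gt (Real.exp (4 * C3 / (c0 * ε) + 2 * C3 / ε))
    refine ⟨max m1 m2, hm1.trans (le_max_left _ _), ?_⟩
    intro m hm n hn D hmD hD
    have hmm1 : m1 ≤ m := (le_max_left _ _).trans hm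
    have hmm2 : m2 ≤ m := (le_max_right _ _).trans hm
    have hm2' : 2 ≤ m := hm1.trans hmm1
    have hm0 : (0 : ℝ) < m := by exact_mod_cast (by omega : 0 < m)
    have hD0 : 0 < D := lt_of_lt_of_le hm0 hmD
    have hl := (rs_log_succ hm2').1
    set l := Real.log m with hldef
    set T := Real.log D with hT
    have hlT : l ≤ T := Real.log_le_log hm0 hmD
    have hTpos : 0 < T := by linarith
    have hlbig : 4 * C3 / (c0 * ε) + 2 * C3 / ε < l := by
      rw [hldef, Real.lt_log_iff_exp_lt hm0]
      refine hm2.trans_le ?_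
      exact_mod_cast hmm2
    have hq1 : 0 ≤ 4 * C3 / (c0 * ε) := by positivity
    have hq2 : 0 ≤ 2 * C3 / ε := by positivity
    set η := C3 / l with hη
    have hη0 : 0 ≤ η := by positivity
    have hη1 : 2 * η / c0 ≤ ε / 2 := by
      have : 4 * C3 / (c0 * ε) ≤ l := by linarith
      rw [div_le_iff₀ (by positivity)] at this
      rw [hη, div_le_div_iff₀ hc0 (by norm_num), ← mul_div_assoc, div_mul_eq_mul_div, div_le_iff₀ hl]
      linarith
    have hη2 : η ≤ ε / 2 := by
      have : 2 * C3 / ε ≤ l := by linarith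
      rw [div_le_iff₀ (by positivity)] at this
      rw [hη, div_le_div_iff₀ hl (by norm_num)]
      linarith
    -- Mertens bounds in normalized form
    have hMl : ∀ k, m ≤ k → k ≤ n → -(l / Real.log k) - -(l / Real.log m) - η ≤
        ∑ j ∈ Finset.Ico m k, l * rsC3 j := by
      intro k hk _
      have h1 := (abs_le.1 (hM3 m k hm2' hk).1).1
      rw [← Finset.mul_sum]
      have h2 := mul_le_mul_of_nonneg_left h1 hl.le
      have e1 : l * -(C3 / l ^ 2) = - η := by rw [hη]; field_simp
      have e2 : l * (∑ j ∈ Finset.Ico m k, rsC3 j - (1 / l - 1 / Real.log k)) =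
        l * ∑ j ∈ Finset.Ico m k, rsC3 j - (l / l - l / Real.log k) := by ring
      rw [e1, e2] at h2
      rw [← hldef]
      linarith
    have hMu : ∑ j ∈ Finset.Ico m n, l * rsC3 j ≤ -(l / Real.log n) - -(l / Real.log m) + η := by
      have h1 := (abs_le.1 (hM3 m n hm2' hn).1).2
      rw [← Finset.mul_sum]
      have h2 := mul_le_mul_of_nonneg_left h1 hl.le
      have e1 : l * (C3 / l ^ 2) = η := by rw [hη]; field_simp
      have e2 : l * (∑ j ∈ Finset.Ico m n, rsC3 j - (1 / l - 1 / Real.log n)) =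
        l * ∑ j ∈ Finset.Ico m n, rsC3 j - (l / l - l / Real.log n) := by ring
      rw [e1, e2] at h2
      rw [← hldef]
      linarith
    -- facts about division by a prime
    have hdiv : ∀ k : ℕ, m ≤ k → (k : ℝ) ^ 2 ≤ D → (m : ℝ) ≤ D / k ∧ Real.log (D / k) ≤ N * l ∧
        Real.log (D / k) = T - Real.log k ∧ 0 < Real.log k ∧ Real.log k ≤ Real.log (D / k) := by
      intro k hk hkD
      have hk0 : (0 : ℝ) < k := by exact_mod_cast (by omega : 0 < k)
      have hmk : (m : ℝ) ≤ k := by exact_mod_cast hk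
      have e : Real.log (D / k) = T - Real.log k := Real.log_div hD0.ne' hk0.ne'
      have hlk : l ≤ Real.log k := rs_log_mono hm2' hk
      have hkk : (k : ℝ) ≤ D / k := by rw [le_div_iff₀ hk0]; nlinarith
      refine ⟨hmk.trans hkk, ?_, e, by linarith, Real.log_le_log hk0 hkk⟩
      rw [e]
      push_cast at hD
      linarith
    constructor
    · rw [rsW_unroll']
      have hterm : ∀ k ∈ Finset.Ico m n,
          (1 / c0) * ((l * rsC3 k) * rsf (T / Real.log k - 1)) -
            (if (k : ℝ) ≤ D then ε / (2 * B) * rsC2 k else 0) ≤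
          (if k.Prime ∧ (true = true → (k : ℝ) ^ (2 + 1) < D) then
            (1 / (k : ℝ)) * rsW m 2 k (!true) (D / k) else 0) := by
        intro k hk
        rw [Finset.mem_Ico] at hk
        have hk2 : 2 ≤ k := hm2'.trans hk.1
        have hk0 : (0 : ℝ) < k := by exact_mod_cast (by omega : 0 < k)
        have hk1 : (1 : ℝ) ≤ k := by exact_mod_cast (by omega : 1 ≤ k)
        have hlk := (rs_log_succ hk2).1
        have hsplit : 0 ≤ (if (k : ℝ) ≤ D then ε / (2 * B) * rsC2 k else 0) := by
          have := rsC2_nonneg k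
          split_ifs <;> positivity
        by_cases hp : k.Prime
        · by_cases hkD : (k : ℝ) ^ 3 < D
          · have hk2D : (k : ℝ) ^ 2 ≤ D / k := by
              rw [le_div_iff₀ hk0, ← pow_succ]; exact hkD.le
            have hkD' : (k : ℝ) ^ 2 ≤ D := by
              have : (k : ℝ) ^ 2 ≤ (k : ℝ) ^ 3 := pow_le_pow_right₀ hk1 (by norm_num)
              linarith
            have hkD1 : (k : ℝ) ≤ D := by nlinarith
            obtain ⟨h1, h2, h3, h4, h5⟩ := hdiv k hk.1 hkD'
            have h6 := (hmain m hmm1 k hk.1 (D / k) h1 h2).2 hk2D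
            have hs1 : 1 ≤ Real.log (D / k) / Real.log k := by rw [le_div_iff₀ h4]; linarith
            have h7 : rsa (Real.log (D / k) / Real.log k) * l / (c0 * Real.log (D / k)) =
                (1 / c0) * (l / Real.log k * rsf (T / Real.log k - 1)) := by
              have e : T / Real.log k - 1 = Real.log (D / k) / Real.log k := by
                rw [h3]; field_simp
              rw [e, rsf_eq_a hs1]
              have : Real.log (D / k) ≠ 0 := by linarith
              field_simp
            rw [h7] at h6
            have h8 := mul_le_mul_of_nonneg_left h6 (by positivity : (0 : ℝ) ≤ 1 / k)
            rw [if_pos hkD1, if_pos ⟨hp, fun _ => hkD⟩]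
            unfold rsC3 rsC2
            rw [if_pos hp, if_pos hp]
            refine le_trans (le_of_eq ?_) h8
            field_simp
          · rw [if_neg (c := k.Prime ∧ (true = true → (k : ℝ) ^ (2 + 1) < D)) (fun h => hkD (h.2 rfl))]
            have h3 : T / Real.log k - 1 ≤ 2 := by
              have := Real.log_le_log hD0 (not_lt.1 hkD)
              rw [Real.log_pow] at this
              push_cast at this
              have : T / Real.log k ≤ 3 := by rw [div_le_iff₀ hlk]; exact this
              linarith
            rw [rsf_zero h3]
            simpa using hsplit
        · rw [if_neg (c := k.Prime ∧ (true = true → (k : ℝ) ^ (2 + 1) < D)) (fun h => hp h.1)]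
          unfold rsC3
          rw [if_neg hp]
          simpa using hsplit
      have hsum := Finset.sum_le_sum hterm
      rw [Finset.sum_sub_distrib, ← Finset.mul_sum] at hsum
      have hab := rs_abel_anti_lower (fun k => l * rsC3 k) (fun k => -(l / Real.log k))
        (fun k => rsf (T / Real.log k - 1)) (fun k => -(rsA (T / Real.log k) * l / T)) m n η hn
        (by
          intro k h1 h2
          have := rs_log_succ (hm2'.trans h1)
          apply rsf_mono
          have : T / Real.log ((k + 1 : ℕ) : ℝ) ≤ T / Real.log k := by
            apply div_le_div_of_nonneg_left hTpos.le this.1 this.2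
          linarith)
        (rsf_nonneg _) hMl
        (by
          intro k h1 h2
          have h3 := rs_log_succ (hm2'.trans h1)
          have h4 : T / Real.log ((k + 1 : ℕ) : ℝ) ≤ T / Real.log k := by
            apply div_le_div_of_nonneg_left hTpos.le h3.1 h3.2
          have h5 := (rsA_incr h4).2
          have h6 := mul_le_mul_of_nonneg_left h5 (by positivity : 0 ≤ l / T)
          have hp : 0 < Real.log ((k + 1 : ℕ) : ℝ) := by linarith
          have e : l / T * ((T / Real.log k - T / Real.log ((k + 1 : ℕ) : ℝ)) * rsf (T / Real.log k - 1)) =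
            (l / Real.log k - l / Real.log ((k + 1 : ℕ) : ℝ)) * rsf (T / Real.log k - 1) := by
            have := h3.1
            field_simp
          rw [e] at h6
          have e2 : l / T * (rsA (T / Real.log k) - rsA (T / Real.log ((k + 1 : ℕ) : ℝ))) =
            rsA (T / Real.log k) * l / T - rsA (T / Real.log ((k + 1 : ℕ) : ℝ)) * l / T := by ring
          rw [e2] at h6
          linarith)
      have hfm : rsf (T / Real.log m - 1) ≤ c0 := by
        rcases le_or_gt 1 (T / Real.log m - 1) with h | h
        · exact hc1 _ h
        · rw [rsf_zero (by linarith)]; exact hc0.le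
      have hAm : c0 ≤ rsA (T / Real.log m) * l / T := by
        rw [← hldef]
        have h1 : 1 ≤ T / l := by rw [le_div_iff₀ hl]; linarith
        have := hc2 _ h1
        rw [rsF_eq_A h1] at this
        refine this.trans (le_of_eq ?_)
        field_simp
      have hsumC : ∑ k ∈ Finset.Ico m n, (if (k : ℝ) ≤ D then ε / (2 * B) * rsC2 k else 0) ≤ ε / 2 := by
        rw [← Finset.sum_filter, ← Finset.mul_sum]
        have := hsumC2 (N + 1) m D hm2' (by omega) hmD hD
          ((Finset.Ico m n).filter (fun k : ℕ => (k : ℝ) ≤ D)) (by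
            intro k hk
            rw [Finset.mem_filter, Finset.mem_Ico] at hk
            exact ⟨hk.1.1, hk.2⟩)
        calc _ ≤ ε / (2 * B) * B := by gcongr
          _ = ε / 2 := by field_simp
      have hab2 : c0 - rsA (T / Real.log n) * l / T - η * c0 ≤
          ∑ k ∈ Finset.Ico m n, l * rsC3 k * rsf (T / Real.log k - 1) := by
        have := mul_le_mul_of_nonneg_left hfm hη0
        linarith
      have hab3 := mul_le_mul_of_nonneg_left hab2 (by positivity : 0 ≤ 1 / c0)
      have e : 1 / c0 * (c0 - rsA (T / Real.log n) * l / T - η * c0) =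
        1 - rsA (T / Real.log n) * l / (c0 * T) - η := by field_simp
      rw [e] at hab3
      linarith
    · intro hnD
      rw [rsW_unroll']
      have hkD : ∀ k : ℕ, k ≤ n → (k : ℝ) ^ 2 ≤ D := by
        intro k hk
        refine le_trans ?_ hnD
        have : (k : ℝ) ≤ n := by exact_mod_cast hk
        gcongr
      have harg : ∀ k : ℕ, m ≤ k → k ≤ n → 2 ≤ T / Real.log k := by
        intro k h1 h2
        have h3 := hdiv k h1 (hkD k h2)
        rw [le_div_iff₀ h3.2.2.2.1]
        linarith [h3.2.2.1, h3.2.2.2.2]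
      have hterm : ∀ k ∈ Finset.Ico m n,
          (if k.Prime ∧ (false = true → (k : ℝ) ^ (2 + 1) < D) then
            (1 / (k : ℝ)) * rsW m 2 k (!false) (D / k) else 0) ≤
          (1 / c0) * ((l * rsC3 k) * rsF (T / Real.log k - 1)) + ε / (2 * B) * rsC2 k := by
        intro k hk
        rw [Finset.mem_Ico] at hk
        have hk2 : 2 ≤ k := hm2'.trans hk.1
        have hk0 : (0 : ℝ) < k := by exact_mod_cast (by omega : 0 < k)
        by_cases hp : k.Prime
        · rw [if_pos ⟨hp, fun h => by simp at h⟩]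
          obtain ⟨h1, h2, h3, h4, h5⟩ := hdiv k hk.1 (hkD k hk.2.le)
          have h6 := (hmain m hmm1 k hk.1 (D / k) h1 h2).1
          have hs1 : 1 ≤ Real.log (D / k) / Real.log k := by rw [le_div_iff₀ h4]; linarith
          have h7 : rsA (Real.log (D / k) / Real.log k) * l / (c0 * Real.log (D / k)) =
              (1 / c0) * (l / Real.log k * rsF (T / Real.log k - 1)) := by
            have e : T / Real.log k - 1 = Real.log (D / k) / Real.log k := by
              rw [h3]; field_simp
            rw [e, rsF_eq_A hs1]
            have : Real.log (D / k) ≠ 0 := by linarith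
            field_simp
          rw [h7] at h6
          have h8 := mul_le_mul_of_nonneg_left h6 (by positivity : (0 : ℝ) ≤ 1 / k)
          unfold rsC3 rsC2
          rw [if_pos hp, if_pos hp]
          refine le_trans h8 (le_of_eq ?_)
          field_simp
        · rw [if_neg (fun h => hp h.1)]
          unfold rsC3 rsC2
          rw [if_neg hp, if_neg hp]
          simp
      have hsum := Finset.sum_le_sum hterm
      rw [Finset.sum_add_distrib, ← Finset.mul_sum, ← Finset.mul_sum] at hsum
      have hab := rs_abel_mono_upper (fun k => l * rsC3 k) (fun k => -(l / Real.log k))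
        (fun k => rsF (T / Real.log k - 1)) (fun k => -(rsa (T / Real.log k) * l / T)) m n η 1 hn hη0
        (by
          intro k h1 h2
          have := rs_log_succ (hm2'.trans h1)
          have h3 := harg (k + 1) (by omega) (by omega)
          apply rsF_anti (by linarith)
          have : T / Real.log ((k + 1 : ℕ) : ℝ) ≤ T / Real.log k := by
            apply div_le_div_of_nonneg_left hTpos.le this.1 this.2
          linarith)
        (rsF_pos (by have := harg m le_rfl hn; linarith)).le
        (by
          have h1 := harg n hn le_rfl
          have h2 := rsF_anti (x := 1) (y := T / Real.log n - 1) le_rfl (by linarith)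
          rw [rsF_inv le_rfl (by norm_num)] at h2
          linarith)
        hMl hMu (by norm_num)
        (by
          intro k h1 h2
          have h3 := rs_log_succ (hm2'.trans h1)
          have h4 : T / Real.log ((k + 1 : ℕ) : ℝ) ≤ T / Real.log k := by
            apply div_le_div_of_nonneg_left hTpos.le h3.1 h3.2
          have h5 := (rsa_incr (harg (k + 1) (by omega) (by omega)) h4).1
          have h6 := mul_le_mul_of_nonneg_left h5 (by positivity : 0 ≤ l / T)
          have hp : 0 < Real.log ((k + 1 : ℕ) : ℝ) := by linarith
          have e : l / T * ((T / Real.log k - T / Real.log ((k + 1 : ℕ) : ℝ)) * rsF (T / Real.log k - 1)) =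
            (l / Real.log k - l / Real.log ((k + 1 : ℕ) : ℝ)) * rsF (T / Real.log k - 1) := by
            have := h3.1
            field_simp
          rw [e] at h6
          have e2 : l / T * (rsa (T / Real.log k) - rsa (T / Real.log ((k + 1 : ℕ) : ℝ))) =
            rsa (T / Real.log k) * l / T - rsa (T / Real.log ((k + 1 : ℕ) : ℝ)) * l / T := by ring
          rw [e2] at h6
          linarith)
      have hAm : rsa (T / Real.log m) * l / T ≤ c0 := by
        rw [← hldef]
        have h1 : 1 ≤ T / l := by rw [le_div_iff₀ hl]; linarith
        have := hc1 _ h1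
        rw [rsf_eq_a h1] at this
        refine le_trans (le_of_eq ?_) this
        field_simp
      have hsumC : ε / (2 * B) * ∑ k ∈ Finset.Ico m n, rsC2 k ≤ ε / 2 := by
        have := hsumC2 (N + 1) m D hm2' (by omega) hmD hD (Finset.Ico m n) (by
            intro k hk
            rw [Finset.mem_Ico] at hk
            refine ⟨hk.1, ?_⟩
            have h1 := hkD k hk.2.le
            have h2 : (1 : ℝ) ≤ k := by exact_mod_cast (by omega : 1 ≤ k)
            nlinarith)
        calc _ ≤ ε / (2 * B) * B := by gcongr
          _ = ε / 2 := by field_simp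
      have hab2 : ∑ k ∈ Finset.Ico m n, l * rsC3 k * rsF (T / Real.log k - 1) ≤
          c0 - rsa (T / Real.log n) * l / T + 2 * η := by
        linarith
      have hab3 := mul_le_mul_of_nonneg_left hab2 (by positivity : 0 ≤ 1 / c0)
      have e : 1 / c0 * (c0 - rsa (T / Real.log n) * l / T + 2 * η) =
        1 - rsa (T / Real.log n) * l / (c0 * T) + 2 * η / c0 := by field_simp
      rw [e] at hab3
      linarith


lemma rs_sigma_nonneg (ψ : ℝ → ℝ) (h01 : ∀ x, ψ x ∈ Set.Icc (0 : ℝ) 1) (h0 : ∀ x : ℝ, x ≤ 1 → ψ x = 0)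
    (h1 : ∀ x : ℝ, Real.sqrt 2 ≤ x → ψ x = 1) (x : ℝ) :
    0 ≤ ψ x - ψ (x / Real.sqrt 2) := by
  have hs : 0 < Real.sqrt 2 := by positivity
  rcases le_or_gt (Real.sqrt 2) x with h | h
  · rw [h1 x h]; linarith [(h01 (x / Real.sqrt 2)).2]
  · rw [h0 (x / Real.sqrt 2) (by rw [div_le_one hs]; exact h.le)]
    linarith [(h01 x).1]

/-- Bound for the subtracted sum by a sum over primes. -/
lemma rs_T_bound (ψ : ℝ → ℝ) (h01 : ∀ x, ψ x ∈ Set.Icc (0 : ℝ) 1) (h0 : ∀ x : ℝ, x ≤ 1 → ψ x = 0)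
    (h1 : ∀ x : ℝ, Real.sqrt 2 ≤ x → ψ x = 1) (y : ℝ) (hy : 1 < y) (a0 a1 p0 : ℕ)
    (hp0 : ∀ p : ℕ, Real.sqrt 2 ^ a0 < p → p0 ≤ p) (Λ H : ℕ → ℝ) (R : ℝ) (hR : 0 ≤ R)
    (hΛ0 : ∀ a, 0 ≤ Λ a) (hH0 : ∀ p : ℕ, p0 ≤ p → (p : ℝ) < y → 0 ≤ H p)
    (hΛ : ∀ a ∈ Finset.Icc a0 a1, ∀ p : ℕ, Real.sqrt 2 ^ a < p → (p : ℝ) < Real.sqrt 2 ^ (a + 2) →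
      (p : ℝ) < y → Λ a ≤ H p) :
    ∑ a ∈ Finset.Icc a0 a1, ∑' p : ℕ, (if p.Prime then
          (ψ ((p : ℝ) / Real.sqrt 2 ^ a) - ψ ((p : ℝ) / Real.sqrt 2 ^ a / Real.sqrt 2)) *
            (1 - Real.log p / Real.log y) * (Λ a * R / p) else 0) ≤
    R * ∑ p ∈ Finset.Ico p0 ⌈y⌉₊, rsC2 p * ((1 - Real.log p / Real.log y) * H p) := by
  have hs : 0 < Real.sqrt 2 := by positivity
  have hs1 : 1 ≤ Real.sqrt 2 := Real.one_le_sqrt.2 (by norm_num)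
  have hly : 0 < Real.log y := Real.log_pos hy
  set Q : ℕ := ⌈Real.sqrt 2 ^ (a1 + 2)⌉₊ with hQ
  have hsp : ∀ a : ℕ, 0 < Real.sqrt 2 ^ a := fun a => by positivity
  have hsig0 : ∀ a p : ℕ, (p : ℝ) ≤ Real.sqrt 2 ^ a →
      ψ ((p : ℝ) / Real.sqrt 2 ^ a) - ψ ((p : ℝ) / Real.sqrt 2 ^ a / Real.sqrt 2) = 0 := by
    intro a p hp
    have e1 : (p : ℝ) / Real.sqrt 2 ^ a ≤ 1 := by rw [div_le_one (hsp a)]; exact hp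
    have e2 : (p : ℝ) / Real.sqrt 2 ^ a / Real.sqrt 2 ≤ 1 := by
      rw [div_le_one hs]; linarith
    rw [h0 _ e1, h0 _ e2, sub_zero]
  have hsig1 : ∀ a p : ℕ, Real.sqrt 2 ^ (a + 2) ≤ (p : ℝ) →
      ψ ((p : ℝ) / Real.sqrt 2 ^ a) - ψ ((p : ℝ) / Real.sqrt 2 ^ a / Real.sqrt 2) = 0 := by
    intro a p hp
    have e2 : Real.sqrt 2 ≤ (p : ℝ) / Real.sqrt 2 ^ a / Real.sqrt 2 := by
      rw [le_div_iff₀ hs, le_div_iff₀ (hsp a)]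
      refine le_trans (le_of_eq ?_) hp
      ring
    have e1 : Real.sqrt 2 ≤ (p : ℝ) / Real.sqrt 2 ^ a := by
      refine e2.trans (div_le_self (by positivity) hs1)
    rw [h1 _ e1, h1 _ e2, sub_self]
  set B : ℕ → ℝ := fun p => if p0 ≤ p ∧ (p : ℝ) < y then rsC2 p * ((1 - Real.log p / Real.log y) * H p) else 0 with hB
  have hB0 : ∀ p, 0 ≤ B p := by
    intro p
    simp only [hB]
    split_ifs with h
    · apply mul_nonneg (rsC2_nonneg p)
      apply mul_nonneg _ (hH0 p h.1 h.2)
      rw [sub_nonneg, div_le_one hly]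
      rcases Nat.eq_zero_or_pos p with h' | h'
      · subst h'; simpa using hly.le
      · exact Real.log_le_log (by exact_mod_cast h') h.2.le
    · exact le_rfl
  have hterm : ∀ a ∈ Finset.Icc a0 a1, ∀ p : ℕ, (if p.Prime then
          (ψ ((p : ℝ) / Real.sqrt 2 ^ a) - ψ ((p : ℝ) / Real.sqrt 2 ^ a / Real.sqrt 2)) *
            (1 - Real.log p / Real.log y) * (Λ a * R / p) else 0) ≤
        R * ((ψ ((p : ℝ) / Real.sqrt 2 ^ a) - ψ ((p : ℝ) / Real.sqrt 2 ^ a / Real.sqrt 2)) * B p) := by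
    intro a ha p
    have hsn := rs_sigma_nonneg ψ h01 h0 h1 ((p : ℝ) / Real.sqrt 2 ^ a)
    have hrhs : 0 ≤ R * ((ψ ((p : ℝ) / Real.sqrt 2 ^ a) - ψ ((p : ℝ) / Real.sqrt 2 ^ a / Real.sqrt 2)) * B p) :=
      mul_nonneg hR (mul_nonneg hsn (hB0 p))
    by_cases hp : p.Prime
    · rw [if_pos hp]
      have hpp : (0 : ℝ) < p := by exact_mod_cast hp.pos
      rcases le_or_gt (p : ℝ) (Real.sqrt 2 ^ a) with h2 | h2
      · rw [hsig0 a p h2]; simp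
      rcases le_or_gt (Real.sqrt 2 ^ (a + 2)) (p : ℝ) with h3 | h3
      · rw [hsig1 a p h3]; simp
      rcases le_or_gt y (p : ℝ) with h4 | h4
      · refine le_trans ?_ hrhs
        have : 1 - Real.log p / Real.log y ≤ 0 := by
          rw [sub_nonpos, one_le_div hly]
          exact Real.log_le_log (by linarith) h4
        apply mul_nonpos_of_nonpos_of_nonneg
        · exact mul_nonpos_of_nonneg_of_nonpos hsn this
        · have := hΛ0 a
          positivity
      · have hp0' : p0 ≤ p := hp0 p (lt_of_le_of_lt (pow_le_pow_right₀ hs1 (Finset.mem_Icc.1 ha).1) h2)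
        have hl := hΛ a ha p h2 h3 h4
        have hnn : 0 ≤ 1 - Real.log p / Real.log y := by
          rw [sub_nonneg, div_le_one hly]
          exact Real.log_le_log hpp h4.le
        simp only [hB]
        rw [if_pos ⟨hp0', h4⟩]
        unfold rsC2
        rw [if_pos hp]
        set σ := ψ ((p : ℝ) / Real.sqrt 2 ^ a) - ψ ((p : ℝ) / Real.sqrt 2 ^ a / Real.sqrt 2)
        calc σ * (1 - Real.log p / Real.log y) * (Λ a * R / p) ≤
            σ * (1 - Real.log p / Real.log y) * (H p * R / p) := by gcongr
          _ = _ := by ring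
    · rw [if_neg hp]; exact hrhs
  have hts : ∀ a ∈ Finset.Icc a0 a1, ∑' p : ℕ, (if p.Prime then
          (ψ ((p : ℝ) / Real.sqrt 2 ^ a) - ψ ((p : ℝ) / Real.sqrt 2 ^ a / Real.sqrt 2)) *
            (1 - Real.log p / Real.log y) * (Λ a * R / p) else 0) ≤
      ∑ p ∈ Finset.range Q, R * ((ψ ((p : ℝ) / Real.sqrt 2 ^ a) - ψ ((p : ℝ) / Real.sqrt 2 ^ a / Real.sqrt 2)) * B p) := by
    intro a ha
    rw [tsum_eq_sum (s := Finset.range Q)]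
    · exact Finset.sum_le_sum (fun p _ => hterm a ha p)
    · intro p hp
      rw [Finset.mem_range, not_lt] at hp
      have : Real.sqrt 2 ^ (a + 2) ≤ (p : ℝ) := by
        have e1 : Real.sqrt 2 ^ (a + 2) ≤ Real.sqrt 2 ^ (a1 + 2) :=
          pow_le_pow_right₀ hs1 (by have := (Finset.mem_Icc.1 ha).2; omega)
        have e2 : Real.sqrt 2 ^ (a1 + 2) ≤ (Q : ℝ) := Nat.le_ceil _
        have e3 : (Q : ℝ) ≤ p := by exact_mod_cast hp
        linarith
      rw [hsig1 a p this]; simp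
  refine (Finset.sum_le_sum hts).trans ?_
  rw [Finset.sum_comm]
  have htel : ∀ p : ℕ, ∑ a ∈ Finset.Icc a0 a1, (ψ ((p : ℝ) / Real.sqrt 2 ^ a) - ψ ((p : ℝ) / Real.sqrt 2 ^ a / Real.sqrt 2)) ≤ 1 := by
    intro p
    obtain ⟨u, hu⟩ : ∃ u : ℕ → ℝ, ∀ a : ℕ, u a = ψ ((p : ℝ) / Real.sqrt 2 ^ a) := ⟨_, fun _ => rfl⟩
    have e : ∀ a : ℕ, ψ ((p : ℝ) / Real.sqrt 2 ^ a) - ψ ((p : ℝ) / Real.sqrt 2 ^ a / Real.sqrt 2) =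
        -(u (a + 1) - u a) := by
      intro a
      rw [hu, hu, pow_succ, div_div]
      ring
    rcases le_or_gt a0 a1 with h | h
    · rw [Finset.sum_congr rfl (fun a _ => e a), Finset.sum_neg_distrib]
      have e3 : Finset.Icc a0 a1 = Finset.Ico a0 (a1 + 1) := by
        ext; simp
      rw [e3, Finset.sum_Ico_sub u (by omega : a0 ≤ a1 + 1), hu, hu]
      have q1 := (h01 ((p : ℝ) / Real.sqrt 2 ^ a0)).2
      have q2 := (h01 ((p : ℝ) / Real.sqrt 2 ^ (a1 + 1))).1
      linarith
    · rw [Finset.Icc_eq_empty (by omega)]; simp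
  have hcol : ∀ p ∈ Finset.range Q, ∑ a ∈ Finset.Icc a0 a1, R * ((ψ ((p : ℝ) / Real.sqrt 2 ^ a) - ψ ((p : ℝ) / Real.sqrt 2 ^ a / Real.sqrt 2)) * B p) ≤ R * B p := by
    intro p _
    rw [← Finset.mul_sum, ← Finset.sum_mul]
    apply mul_le_mul_of_nonneg_left _ hR
    calc _ ≤ 1 * B p := mul_le_mul_of_nonneg_right (htel p) (hB0 p)
      _ = B p := one_mul _
  refine (Finset.sum_le_sum hcol).trans ?_
  rw [← Finset.mul_sum]
  apply mul_le_mul_of_nonneg_left _ hR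
  have hBsum : ∑ p ∈ Finset.range Q, B p = ∑ p ∈ (Finset.range Q).filter (fun p : ℕ => p0 ≤ p ∧ (p : ℝ) < y), B p := by
    rw [Finset.sum_filter]
    apply Finset.sum_congr rfl
    intro p _
    simp only [hB]
    split_ifs <;> rfl
  rw [hBsum]
  have hsub : (Finset.range Q).filter (fun p : ℕ => p0 ≤ p ∧ (p : ℝ) < y) ⊆ Finset.Ico p0 ⌈y⌉₊ := by
    intro p hp
    rw [Finset.mem_filter] at hp
    rw [Finset.mem_Ico]
    exact ⟨hp.2.1, Nat.lt_ceil.2 hp.2.2⟩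
  refine (Finset.sum_le_sum_of_subset_of_nonneg hsub (fun p _ _ => hB0 p)).trans (le_of_eq ?_)
  apply Finset.sum_congr rfl
  intro p hp
  rw [Finset.mem_Ico] at hp
  simp only [hB]
  rw [if_pos ⟨hp.1, Nat.lt_ceil.1 hp.2⟩]

/-- Abel summation for the Richert weights. -/
lemma rs_richert_sum : ∃ C : ℝ, 0 ≤ C ∧ ∀ p0 n : ℕ, 2 ≤ p0 → p0 ≤ n → ∀ Q : ℝ, Real.log n < Q →
    ∑ p ∈ Finset.Ico p0 n, rsC2 p * ((1 - Real.log p / Real.log n) / (Q - Real.log p)) ≤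
      (1 / Q) * (Real.log (Real.log n / Real.log p0)) + (1 / Real.log n - 1 / Q) *
        Real.log ((Q - Real.log n) / (Q - Real.log p0)) + C / Real.log p0 / (Q - Real.log p0) := by
  obtain ⟨C, hC, h⟩ := rs_mertens2
  refine ⟨C, hC, ?_⟩
  intro p0 n hp0 hpn Q hQ
  have hlp := (rs_log_succ hp0).1
  have hln : Real.log p0 ≤ Real.log n := rs_log_mono hp0 hpn
  set Y := Real.log n with hY
  have hY0 : 0 < Y := by linarith
  have hQ0 : 0 < Q := by linarith
  have hinv : 1 / Q ≤ 1 / Y := one_div_le_one_div_of_le hY0 hQ.le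
  -- the elementary inequality
  have hel : ∀ t1 t2 : ℝ, 0 < t1 → t1 ≤ t2 → t2 ≤ Y →
      (Real.log t2 - Real.log t1) * ((1 - t2 / Y) / (Q - t2)) ≤
        ((1 / Q) * Real.log t2 + (1 / Y - 1 / Q) * Real.log (Q - t2)) -
        ((1 / Q) * Real.log t1 + (1 / Y - 1 / Q) * Real.log (Q - t1)) := by
    intro t1 t2 ht1 ht12 ht2
    have ht2' : 0 < t2 := by linarith
    have hq2 : 0 < Q - t2 := by linarith
    have hq1 : 0 < Q - t1 := by linarith
    have e1 : (1 - t2 / Y) / (Q - t2) = 1 / Q - t2 * (1 / Y - 1 / Q) / (Q - t2) := by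
      field_simp; ring
    have i1 : t2 - t1 ≤ (Real.log t2 - Real.log t1) * t2 := by
      have := Real.one_sub_inv_le_log_of_pos (x := t2 / t1) (by positivity)
      rw [Real.log_div ht2'.ne' ht1.ne', inv_div] at this
      have h2 := mul_le_mul_of_nonneg_right this ht2'.le
      have e : (1 - t1 / t2) * t2 = t2 - t1 := by field_simp
      linarith
    have i2 : -((t2 - t1) / (Q - t2)) ≤ Real.log (Q - t2) - Real.log (Q - t1) := by
      have := Real.one_sub_inv_le_log_of_pos (x := (Q - t2) / (Q - t1)) (by positivity)
      rw [Real.log_div hq2.ne' hq1.ne', inv_div] at this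
      refine le_trans (le_of_eq ?_) this
      field_simp; ring
    have hb : 0 ≤ 1 / Y - 1 / Q := by linarith
    rw [e1]
    have i3 : (t2 - t1) / (Q - t2) ≤ (Real.log t2 - Real.log t1) * t2 / (Q - t2) := by gcongr
    have i4 : -((Real.log t2 - Real.log t1) * t2 / (Q - t2)) ≤ Real.log (Q - t2) - Real.log (Q - t1) := by linarith
    have i5 := mul_le_mul_of_nonneg_left i4 hb
    have e2 : (Real.log t2 - Real.log t1) * (1 / Q - t2 * (1 / Y - 1 / Q) / (Q - t2)) =
      1 / Q * (Real.log t2 - Real.log t1) + (1 / Y - 1 / Q) * -((Real.log t2 - Real.log t1) * t2 / (Q - t2)) := by ring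
    rw [e2]
    linarith
  have hab := rs_abel_anti_upper rsC2 (fun k => Real.log (Real.log k))
    (fun k => (1 - Real.log k / Y) / (Q - Real.log k))
    (fun k => (1 / Q) * Real.log (Real.log k) + (1 / Y - 1 / Q) * Real.log (Q - Real.log k)) p0 n
    (C / Real.log p0) hpn rsC2_nonneg
    (by
      intro k h1 h2
      have h3 := rs_log_succ (hp0.trans h1)
      have h4 : Real.log ((k + 1 : ℕ) : ℝ) ≤ Y := rs_log_mono (by omega) (by omega)
      have e : ∀ t, t ≤ Y → (1 - t / Y) / (Q - t) = 1 / Y - (Q / Y - 1) / (Q - t) := by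
        intro t ht
        have : Q - t ≠ 0 := by linarith
        field_simp; ring
      rw [e _ h4, e _ (h3.2.trans h4)]
      have hb : 0 ≤ Q / Y - 1 := by rw [sub_nonneg, one_le_div hY0]; exact hQ.le
      have : (Q / Y - 1) / (Q - Real.log k) ≤ (Q / Y - 1) / (Q - Real.log ((k + 1 : ℕ) : ℝ)) := by
        apply div_le_div_of_nonneg_left hb <;> linarith
      linarith)
    (by rw [← hY, div_self hY0.ne']; simp)
    (by
      intro k h1 h2
      have := (abs_le.1 (h p0 k hp0 h1).2).2
      linarith)
    (by
      intro k h1 h2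
      have h3 := rs_log_succ (hp0.trans h1)
      have h4 : Real.log ((k + 1 : ℕ) : ℝ) ≤ Y := rs_log_mono (by omega) (by omega)
      exact hel _ _ h3.1 h3.2 h4)
  refine hab.trans ?_
  rw [← hY]
  have hq1 : 0 < Q - Y := by linarith
  have hq2 : 0 < Q - Real.log p0 := by linarith
  rw [Real.log_div hY0.ne' hlp.ne', Real.log_div hq1.ne' hq2.ne']
  have : C / Real.log p0 * ((1 - Real.log p0 / Y) / (Q - Real.log p0)) ≤ C / Real.log p0 / (Q - Real.log p0) := by
    rw [div_eq_mul_one_div (C / Real.log p0) (Q - Real.log p0)]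
    have : 0 ≤ Real.log p0 / Y := by positivity
    gcongr
    linarith
  linarith

open Filter Topology

lemma rs_ceil_ratio (e c : ℝ) (he : 0 < e) (hc : 0 < c) :
    Tendsto (fun X : ℝ => Real.log (⌈c * X ^ e⌉₊ : ℝ) / Real.log X) atTop (𝓝 e) := by
  have hinv : Tendsto (fun X : ℝ => (Real.log X)⁻¹) atTop (𝓝 0) := tendsto_inv_atTop_zero.comp Real.tendsto_log_atTop
  have h : ∀ b : ℝ, Tendsto (fun X : ℝ => b * (Real.log X)⁻¹ + e) atTop (𝓝 e) := by
    intro b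
    have := (hinv.const_mul b).add_const e
    simpa using this
  have hbig : ∀ᶠ X : ℝ in atTop, 1 ≤ c * X ^ e :=
    ((tendsto_rpow_atTop he).const_mul_atTop hc).eventually_ge_atTop 1
  refine tendsto_of_tendsto_of_tendsto_of_le_of_le' (h (Real.log c)) (h (Real.log (2 * c))) ?_ ?_
  · filter_upwards [hbig, eventually_gt_atTop 1] with X h1 hX
    have hL := Real.log_pos hX
    have hXe : 0 < X ^ e := by positivity
    rw [le_div_iff₀ hL]
    have : Real.log (c * X ^ e) ≤ Real.log (⌈c * X ^ e⌉₊ : ℝ) := Real.log_le_log (by positivity) (Nat.le_ceil _)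
    rw [Real.log_mul hc.ne' hXe.ne', Real.log_rpow (by linarith)] at this
    refine le_trans (le_of_eq ?_) this
    field_simp
  · filter_upwards [hbig, eventually_gt_atTop 1] with X h1 hX
    have hL := Real.log_pos hX
    have hXe : 0 < X ^ e := by positivity
    rw [div_le_iff₀ hL]
    have h2 : (⌈c * X ^ e⌉₊ : ℝ) ≤ 2 * c * X ^ e := by
      have := (Nat.ceil_lt_add_one (by positivity : 0 ≤ c * X ^ e)).le
      linarith
    have h3 : (0 : ℝ) < (⌈c * X ^ e⌉₊ : ℝ) := by
      have := Nat.le_ceil (c * X ^ e)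
      linarith
    have := Real.log_le_log h3 h2
    rw [Real.log_mul (by positivity) hXe.ne', Real.log_rpow (by linarith)] at this
    refine le_trans this (le_of_eq ?_)
    field_simp

noncomputable def rsKappa : ℝ := (1 / (5 / 9)) * Real.log ((1 / 2) / (5 / 36)) +
  (1 / (1 / 2) - 1 / (5 / 9)) * Real.log ((5 / 9 - 1 / 2) / (5 / 9 - 5 / 36))

noncomputable def rsGamma : ℝ := (9 / 5) * Real.log 3 - rsKappa

lemma rsGamma_pos : 0 < rsGamma := by
  unfold rsGamma rsKappa
  have e1 : ((1 : ℝ) / 2) / (5 / 36) = 3 ^ 3 / (15 / 2) := by norm_num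
  have e2 : ((5 : ℝ) / 9 - 1 / 2) / (5 / 9 - 5 / 36) = (15 / 2)⁻¹ := by norm_num
  rw [e1, e2, Real.log_div (by norm_num) (by norm_num), Real.log_inv, Real.log_pow]
  have h : Real.log ((3 : ℝ) ^ 9) < Real.log ((15 / 2) ^ 5) := Real.log_lt_log (by norm_num) (by norm_num)
  rw [Real.log_pow, Real.log_pow] at h
  push_cast at h ⊢
  linarith

lemma rsGamma_le : rsGamma ≤ 4 ∧ rsKappa ≤ 18 / 5 ∧ 0 ≤ rsKappa := by
  have h3 : Real.log 3 ≤ 2 := by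
    have := Real.log_le_sub_one_of_pos (x := 3) (by norm_num)
    linarith
  have hg := rsGamma_pos
  have hk : 0 ≤ rsKappa := by
    unfold rsKappa
    have e1 : ((1 : ℝ) / 2) / (5 / 36) = 18 / 5 := by norm_num
    have e2 : ((5 : ℝ) / 9 - 1 / 2) / (5 / 9 - 5 / 36) = (15 / 2)⁻¹ := by norm_num
    rw [e1, e2, Real.log_inv]
    have h : Real.log (15 / 2 : ℝ) ≤ Real.log ((18 / 5) ^ 9) := Real.log_le_log (by norm_num) (by norm_num)
    rw [Real.log_pow] at h
    push_cast at h
    linarith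
  unfold rsGamma at *
  refine ⟨by linarith, by linarith, hk⟩

noncomputable def rsU (C Y t Q : ℝ) : ℝ :=
  (1 / Q) * (Real.log (Y / t)) + (1 / Y - 1 / Q) * Real.log ((Q - Y) / (Q - t)) + C / t / (Q - t)

lemma rsU_tendsto (C : ℝ) (Y t : ℝ → ℝ) (hY : Tendsto (fun X => Y X / Real.log X) atTop (𝓝 (1 / 2)))
    (ht : Tendsto (fun X => t X / Real.log X) atTop (𝓝 (5 / 36))) :
    Tendsto (fun X => Real.log X * rsU C (Y X) (t X) (5 / 9 * Real.log X - Real.log 2)) atTop (𝓝 rsKappa) := by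
  have hinv : Tendsto (fun X : ℝ => (Real.log X)⁻¹) atTop (𝓝 0) := tendsto_inv_atTop_zero.comp Real.tendsto_log_atTop
  have hQ : Tendsto (fun X : ℝ => 5 / 9 - Real.log 2 * (Real.log X)⁻¹) atTop (𝓝 (5 / 9)) := by
    have := (hinv.const_mul (Real.log 2)).const_sub (5 / 9)
    simpa using this
  have h1 := ((tendsto_const_nhds (x := (1 : ℝ))).div hQ (by norm_num)).mul ((hY.div ht (by norm_num)).log (by norm_num))
  have h2 := (((tendsto_const_nhds (x := (1 : ℝ))).div hY (by norm_num)).sub ((tendsto_const_nhds (x := (1 : ℝ))).div hQ (by norm_num))).mul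
    (((hQ.sub hY).div (hQ.sub ht) (by norm_num)).log (by norm_num))
  have h3 := ((hinv.const_mul C).div ht (by norm_num)).div (hQ.sub ht) (by norm_num)
  have h4 := (h1.add h2).add h3
  have e : 1 / (5 / 9) * Real.log (1 / 2 / (5 / 36)) +
      (1 / (1 / 2) - 1 / (5 / 9)) * Real.log ((5 / 9 - 1 / 2) / (5 / 9 - 5 / 36)) + C * 0 / (5 / 36) / (5 / 9 - 5 / 36) = rsKappa := by
    unfold rsKappa; simp
  rw [e] at h4
  refine h4.congr' ?_
  filter_upwards [eventually_gt_atTop 1] with X hX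
  have hL := Real.log_pos hX
  simp only [Pi.div_apply]
  unfold rsU
  have eQ : 5 / 9 - Real.log 2 * (Real.log X)⁻¹ = (5 / 9 * Real.log X - Real.log 2) / Real.log X := by field_simp
  rw [eQ, ← sub_div, ← sub_div, div_div_div_cancel_right₀ hL.ne', div_div_div_cancel_right₀ hL.ne']
  generalize 5 / 9 * Real.log X - Real.log 2 = Q
  generalize Real.log (Y X / t X) = a1
  generalize Real.log ((Q - Y X) / (Q - t X)) = a2
  generalize Q - t X = b
  rw [one_div_div, one_div_div, div_div_eq_mul_div (C * (Real.log X)⁻¹), div_div_eq_mul_div (C * (Real.log X)⁻¹ * Real.log X / t X)]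
  rw [mul_assoc C, inv_mul_cancel₀ hL.ne', mul_one]
  ring

open Filter Topology

set_option maxHeartbeats 1600000 in
/-- Bound of the subtracted sum in Richert's main term. -/
lemma rs_T_final (c0 : ℝ) (hc0 : 0 < c0) (C : ℝ) (hCs : ∀ p0 n : ℕ, 2 ≤ p0 → p0 ≤ n → ∀ Q : ℝ, Real.log n < Q →
    ∑ p ∈ Finset.Ico p0 n, rsC2 p * ((1 - Real.log p / Real.log n) / (Q - Real.log p)) ≤
      rsU C (Real.log n) (Real.log p0) Q)
    (ψ : ℝ → ℝ) (h01 : ∀ x, ψ x ∈ Set.Icc (0 : ℝ) 1) (h0 : ∀ x : ℝ, x ≤ 1 → ψ x = 0)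
    (h1 : ∀ x : ℝ, Real.sqrt 2 ≤ x → ψ x = 1) (X : ℝ) (hX : 1 < X) (p0 : ℕ)
    (hp0 : p0 = ⌈(1 / 3) * X ^ ((5 : ℝ) / 36)⌉₊) (hp02 : 2 ≤ p0) (m n : ℕ)
    (hn : X ^ ((5 : ℝ) / 36) ≤ n) (ε θ l R : ℝ) (hε : 0 ≤ ε) (hθ : 0 ≤ θ) (hl : 0 ≤ l) (hR : 0 ≤ R)
    (hA : rsA (3 + 36 / 5 * (Real.log X)⁻¹) ≤ 1 + θ)
    (hYQ : Real.log (⌈X ^ ((1 : ℝ) / 2)⌉₊ : ℝ) < 5 / 9 * Real.log X - Real.log 2)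
    (hsum : ∑ p ∈ Finset.Ico p0 ⌈X ^ ((1 : ℝ) / 2)⌉₊, rsC2 p ≤ 3)
    (hlin : ∀ D' : ℝ, 0 < D' → Real.log X / 18 - Real.log 2 ≤ Real.log D' → Real.log D' ≤ 5 / 9 * Real.log X →
      rsW m 2 n true D' ≤ rsA (Real.log D' / Real.log n) * l / (c0 * Real.log D') + ε) :
    ∑ a ∈ Finset.Icc (⌊Real.log (X ^ ((5 : ℝ) / 36)) / Real.log (Real.sqrt 2)⌋₊ - 2)
        ⌊Real.log (X ^ ((1 : ℝ) / 2)) / Real.log (Real.sqrt 2)⌋₊, ∑' p : ℕ, (if p.Prime then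
          (ψ ((p : ℝ) / Real.sqrt 2 ^ a) - ψ ((p : ℝ) / Real.sqrt 2 ^ a / Real.sqrt 2)) *
            (1 - Real.log p / Real.log (X ^ ((1 : ℝ) / 2))) *
            (rsW m 2 n true (X ^ ((5 : ℝ) / 9) / Real.sqrt 2 ^ (a + 2)) * R / p) else 0) ≤
    R * ((1 + θ) * l / c0 * rsU C (Real.log (⌈X ^ ((1 : ℝ) / 2)⌉₊ : ℝ)) (Real.log p0)
      (5 / 9 * Real.log X - Real.log 2) + 3 * ε) := by
  have hX0 : 0 < X := by linarith
  set L := Real.log X with hL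
  have hL0 : 0 < L := Real.log_pos hX
  have hz0 : 0 < X ^ ((5 : ℝ) / 36) := by positivity
  have hy1 : 1 < X ^ ((1 : ℝ) / 2) := Real.one_lt_rpow hX (by norm_num)
  have hD0 : 0 < X ^ ((5 : ℝ) / 9) := by positivity
  have ez : Real.log (X ^ ((5 : ℝ) / 36)) = 5 / 36 * L := Real.log_rpow hX0 _
  have ey : Real.log (X ^ ((1 : ℝ) / 2)) = 1 / 2 * L := Real.log_rpow hX0 _
  have eD : Real.log (X ^ ((5 : ℝ) / 9)) = 5 / 9 * L := Real.log_rpow hX0 _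
  have hs : 0 < Real.sqrt 2 := by positivity
  have hs1 : 1 < Real.sqrt 2 := Real.lt_sqrt_of_sq_lt (by norm_num)
  have els : Real.log (Real.sqrt 2) = Real.log 2 / 2 := Real.log_sqrt (by norm_num)
  have hl2 : 0 < Real.log 2 := Real.log_pos (by norm_num)
  have hl2' : Real.log 2 < 1 := by
    have := Real.log_two_lt_d9; linarith
  set Y := Real.log (⌈X ^ ((1 : ℝ) / 2)⌉₊ : ℝ) with hY
  set Q := 5 / 9 * L - Real.log 2 with hQ
  have hyY : 1 / 2 * L ≤ Y := by
    rw [← ey]; exact Real.log_le_log (by linarith) (Nat.le_ceil _)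
  have hY0 : 0 < Y := by linarith
  have hln : 5 / 36 * L ≤ Real.log n := by
    rw [← ez]; exact Real.log_le_log hz0 hn
  -- lower bound for a0
  have ha0 : ∀ a : ℕ, ⌊Real.log (X ^ ((5 : ℝ) / 36)) / Real.log (Real.sqrt 2)⌋₊ - 2 ≤ a →
      5 / 36 * L ≤ (a + 3) * (Real.log 2 / 2) := by
    intro a ha
    have h2 := Nat.lt_floor_add_one (Real.log (X ^ ((5 : ℝ) / 36)) / Real.log (Real.sqrt 2))
    have h3 : ((⌊Real.log (X ^ ((5 : ℝ) / 36)) / Real.log (Real.sqrt 2)⌋₊ : ℕ) : ℝ) ≤ a + 2 := by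
      exact_mod_cast (by omega)
    rw [ez, els] at h2 h3
    have h4 : 5 / 36 * L / (Real.log 2 / 2) ≤ a + 3 := by linarith
    rwa [div_le_iff₀ (by positivity)] at h4
  have hT := rs_T_bound ψ h01 h0 h1 (X ^ ((1 : ℝ) / 2)) hy1
    (⌊Real.log (X ^ ((5 : ℝ) / 36)) / Real.log (Real.sqrt 2)⌋₊ - 2)
    ⌊Real.log (X ^ ((1 : ℝ) / 2)) / Real.log (Real.sqrt 2)⌋₊ p0
    (by
      intro p hp
      rw [hp0]
      apply Nat.ceil_le.2
      refine le_trans ?_ hp.le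
      have h2 := ha0 _ le_rfl
      set a := ⌊Real.log (X ^ ((5 : ℝ) / 36)) / Real.log (Real.sqrt 2)⌋₊ - 2
      have h3 : X ^ ((5 : ℝ) / 36) ≤ Real.sqrt 2 ^ (a + 3) := by
        rw [← Real.log_le_log_iff hz0 (by positivity), Real.log_pow, ez, els]
        push_cast
        exact h2
      have h4 : Real.sqrt 2 ^ 3 ≤ 3 := by
        have e1 : Real.sqrt 2 ^ 3 = 2 * Real.sqrt 2 := by
          rw [pow_succ, Real.sq_sqrt (by norm_num)]
        have e2 : Real.sqrt 2 ≤ 3 / 2 := Real.sqrt_le_iff.2 ⟨by norm_num, by norm_num⟩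
        linarith
      rw [pow_add] at h3
      have h5 : 0 < Real.sqrt 2 ^ a := by positivity
      nlinarith)
    (fun a => rsW m 2 n true (X ^ ((5 : ℝ) / 9) / Real.sqrt 2 ^ (a + 2)))
    (fun p => (1 + θ) * l / (c0 * (Q - Real.log p)) + ε) R hR (fun a => (rsW_pos _ _ _ _).le)
    (by
      intro p hp hpy
      have hpp : (0 : ℝ) < p := by exact_mod_cast (by omega : 0 < p)
      have h2 : Real.log p ≤ 1 / 2 * L := by
        rw [← ey]; exact Real.log_le_log hpp hpy.le
      have h3 : 0 < Q - Real.log p := by linarith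
      positivity)
    (by
      intro a ha p hp1 hp2 hpy
      have ha1 := ha0 a (Finset.mem_Icc.1 ha).1
      have hpp : (0 : ℝ) < p := lt_trans (by positivity) hp1
      have h2 : Real.log p ≤ 1 / 2 * L := by
        rw [← ey]; exact Real.log_le_log hpp hpy.le
      have h3 : 0 < Q - Real.log p := by linarith
      have h4 : a * (Real.log 2 / 2) ≤ Real.log p := by
        rw [← els, ← Real.log_pow]
        exact Real.log_le_log (by positivity) hp1.le
      have h5 : Real.log (X ^ ((5 : ℝ) / 9) / Real.sqrt 2 ^ (a + 2)) = 5 / 9 * L - (a + 2) * (Real.log 2 / 2) := by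
        rw [Real.log_div hD0.ne' (by positivity), eD, Real.log_pow, els]
        push_cast; ring
      have h6 := hlin (X ^ ((5 : ℝ) / 9) / Real.sqrt 2 ^ (a + 2)) (by positivity)
        (by rw [h5]; linarith)
        (by
          rw [h5]
          have : 0 ≤ ((a : ℝ) + 2) * (Real.log 2 / 2) := by positivity
          linarith)
      refine h6.trans ?_
      set T := Real.log (X ^ ((5 : ℝ) / 9) / Real.sqrt 2 ^ (a + 2)) with hTd
      have hTQ : Q - Real.log p ≤ T := by rw [h5]; linarith
      have hT0 : 0 < T := by linarith
      have hratio : T / Real.log n ≤ 3 + 36 / 5 * L⁻¹ := by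
        rw [div_le_iff₀ (by linarith)]
        have h7 : (3 + 36 / 5 * L⁻¹) * (5 / 36 * L) ≤ (3 + 36 / 5 * L⁻¹) * Real.log n := by gcongr
        have h8 : (3 + 36 / 5 * L⁻¹) * (5 / 36 * L) = 15 / 36 * L + 1 := by field_simp; ring
        have h9 : T ≤ 15 / 36 * L + 1 := by rw [h5]; linarith
        linarith
      have hAle : rsA (T / Real.log n) ≤ 1 + θ := by
        have h7 := (rsA_incr hratio).1
        have h8 : 0 ≤ (3 + 36 / 5 * L⁻¹ - T / Real.log n) * rsf (T / Real.log n - 1) :=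
          mul_nonneg (by linarith) (rsf_nonneg _)
        linarith
      have h10 : rsA (T / Real.log n) * l / (c0 * T) ≤ (1 + θ) * l / (c0 * (Q - Real.log p)) := by
        calc rsA (T / Real.log n) * l / (c0 * T) ≤ (1 + θ) * l / (c0 * T) := by gcongr
          _ ≤ _ := by gcongr
      linarith)
  refine hT.trans ?_
  apply mul_le_mul_of_nonneg_left _ hR
  have hp0n : p0 ≤ ⌈X ^ ((1 : ℝ) / 2)⌉₊ := by
    rw [hp0]
    apply Nat.ceil_mono
    have : X ^ ((5 : ℝ) / 36) ≤ X ^ ((1 : ℝ) / 2) := Real.rpow_le_rpow_of_exponent_le hX.le (by norm_num)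
    linarith
  have hS := hCs p0 _ hp02 hp0n Q hYQ
  rw [← hY] at hS
  have hpt : ∀ p ∈ Finset.Ico p0 ⌈X ^ ((1 : ℝ) / 2)⌉₊,
      rsC2 p * ((1 - Real.log p / Real.log (X ^ ((1 : ℝ) / 2))) * ((1 + θ) * l / (c0 * (Q - Real.log p)) + ε)) ≤
      (1 + θ) * l / c0 * (rsC2 p * ((1 - Real.log p / Y) / (Q - Real.log p))) + ε * rsC2 p := by
    intro p hp
    rw [Finset.mem_Ico] at hp
    have hp2 := (rs_log_succ (hp02.trans hp.1)).1
    have hpY : Real.log p ≤ Y := rs_log_mono (hp02.trans hp.1) hp.2.le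
    have h3 : 0 < Q - Real.log p := by linarith
    have hC := rsC2_nonneg p
    have h4 : 1 - Real.log p / Real.log (X ^ ((1 : ℝ) / 2)) ≤ 1 - Real.log p / Y := by
      rw [ey]
      have : Real.log p / Y ≤ Real.log p / (1 / 2 * L) := by gcongr
      linarith
    have h5 : 1 - Real.log p / Y ≤ 1 := by
      have : 0 ≤ Real.log p / Y := by positivity
      linarith
    calc rsC2 p * ((1 - Real.log p / Real.log (X ^ ((1 : ℝ) / 2))) * ((1 + θ) * l / (c0 * (Q - Real.log p)) + ε))
        ≤ rsC2 p * ((1 - Real.log p / Y) * ((1 + θ) * l / (c0 * (Q - Real.log p)) + ε)) := by gcongr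
      _ = (1 + θ) * l / c0 * (rsC2 p * ((1 - Real.log p / Y) / (Q - Real.log p))) + (1 - Real.log p / Y) * (ε * rsC2 p) := by
        field_simp
      _ ≤ (1 + θ) * l / c0 * (rsC2 p * ((1 - Real.log p / Y) / (Q - Real.log p))) + 1 * (ε * rsC2 p) := by gcongr
      _ = _ := by ring
  refine (Finset.sum_le_sum hpt).trans ?_
  rw [Finset.sum_add_distrib, ← Finset.mul_sum, ← Finset.mul_sum]
  have q1 := mul_le_mul_of_nonneg_left hS (by positivity : 0 ≤ (1 + θ) * l / c0)
  have q2 := mul_le_mul_of_nonneg_left hsum hε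
  linarith

open Filter Topology

/-- The eventual sum of `1/p` over the Richert range is at most `3`. -/
lemma rs_sum_three : ∀ᶠ X : ℝ in atTop,
    ∑ p ∈ Finset.Ico ⌈(1 / 3) * X ^ ((5 : ℝ) / 36)⌉₊ ⌈X ^ ((1 : ℝ) / 2)⌉₊, rsC2 p ≤ 3 := by
  obtain ⟨C, hC, h⟩ := rs_mertens2
  have hinv : Tendsto (fun X : ℝ => (Real.log X)⁻¹) atTop (𝓝 0) := tendsto_inv_atTop_zero.comp Real.tendsto_log_atTop
  have hY := rs_ceil_ratio (1 / 2) 1 (by norm_num) (by norm_num)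
  simp only [one_mul] at hY
  have ht := rs_ceil_ratio (5 / 36) (1 / 3) (by norm_num) (by norm_num)
  have h1 := ((hY.div ht (by norm_num)).log (by norm_num)).add ((hinv.const_mul C).div ht (by norm_num))
  have hlim : Real.log (1 / 2 / (5 / 36)) + C * 0 / (5 / 36) < 3 := by
    have := Real.log_le_sub_one_of_pos (x := 1 / 2 / (5 / 36)) (by norm_num)
    norm_num at this ⊢
    linarith
  have hev := h1.eventually_lt_const hlim
  have hbig : ∀ᶠ X : ℝ in atTop, 2 ≤ (1 / 3) * X ^ ((5 : ℝ) / 36) :=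
    ((tendsto_rpow_atTop (by norm_num : (0 : ℝ) < 5 / 36)).const_mul_atTop (by norm_num)).eventually_ge_atTop 2
  filter_upwards [hev, hbig, eventually_gt_atTop 1] with X h2 h3 hX
  have hL := Real.log_pos hX
  have hp02 : 2 ≤ ⌈(1 / 3) * X ^ ((5 : ℝ) / 36)⌉₊ := by
    exact_mod_cast h3.trans (Nat.le_ceil _)
  have hp0n : ⌈(1 / 3) * X ^ ((5 : ℝ) / 36)⌉₊ ≤ ⌈X ^ ((1 : ℝ) / 2)⌉₊ := by
    apply Nat.ceil_mono
    have : X ^ ((5 : ℝ) / 36) ≤ X ^ ((1 : ℝ) / 2) := Real.rpow_le_rpow_of_exponent_le hX.le (by norm_num)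
    linarith
  have h4 := (abs_le.1 (h _ _ hp02 hp0n).1).2
  have hlp := (rs_log_succ hp02).1
  have hlY := hlp.trans_le (rs_log_mono hp02 hp0n)
  simp only [Pi.div_apply] at h2
  rw [div_div_div_cancel_right₀ hL.ne', Real.log_div hlY.ne' hlp.ne', div_div_eq_mul_div,
    mul_assoc C, inv_mul_cancel₀ hL.ne', mul_one] at h2
  linarith

set_option maxHeartbeats 1600000 in
theorem richert_main_term_lower_bound :
    ∃ δ₀ : ℝ, 0 < δ₀ ∧ ∃ c : ℝ, 0 < c ∧
      ∀ δ : ℝ, δ ∈ Set.Ioo 0 δ₀ →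
        ∀ ψ : ℝ → ℝ, ContDiff ℝ (⊤ : ℕ∞) ψ → (∀ x, ψ x ∈ Set.Icc (0 : ℝ) 1) →
          (∀ x : ℝ, x ≤ 1 → ψ x = 0) → (∀ x : ℝ, Real.sqrt 2 ≤ x → ψ x = 1) →
          ∃ X₀ : ℝ, ∀ X : ℝ, X₀ ≤ X →
            c / Real.log X ≤
              richertMainTerm (X ^ δ) (X ^ ((5 : ℝ) / 36)) (X ^ ((1 : ℝ) / 2))
                (X ^ ((5 : ℝ) / 9)) (X ^ ((1 : ℝ) / 1000)) ψ := by
  obtain ⟨c0, hc0, _, hc1, hc2⟩ := rs_c0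
  obtain ⟨K, hK, hFL⟩ := rs_FL
  obtain ⟨c, C', hc, _, hV⟩ := rsV_bounds
  obtain ⟨CS, hCS, hCs⟩ := rs_richert_sum
  have hγ := rsGamma_pos
  obtain ⟨hγ4, hκ, hκ0⟩ := rsGamma_le
  have hA4 : 1 ≤ rsA 4 := by
    have h1 := (rsA_incr (x := 3) (y := 4) (by norm_num)).1
    rw [rsA_one (le_refl (3 : ℝ))] at h1
    have h2 := rsf_nonneg (3 - 1)
    linarith
  set CA : ℝ := 9 / 5 * rsA 4 + 2 with hCA
  have hCA0 : 0 < CA := by linarith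
  set γ := rsGamma with hγd
  set ε1 : ℝ := γ / 16 with hε1
  set θ : ℝ := γ / 16 with hθ
  refine ⟨min (1 / 60000) (min (c / 2000) (γ * c / (16000 * K * CA))), by positivity,
    c * γ / (8 * c0), by positivity, ?_⟩
  intro δ hδ ψ _ h01 h0 h1
  obtain ⟨hδ0, hδ1⟩ := hδ
  rw [lt_min_iff, lt_min_iff] at hδ1
  obtain ⟨hδ1, hδ2, hδ3⟩ := hδ1
  set ε : ℝ := δ * ε1 / c0 with hε
  have hε0 : 0 < ε := by positivity
  obtain ⟨m0, hm0, hlin⟩ := rs_linear c0 hc0 hc1 hc2 ⌈1 / δ⌉₊ ε hε0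
  have hinv : Tendsto (fun X : ℝ => (Real.log X)⁻¹) atTop (𝓝 0) := tendsto_inv_atTop_zero.comp Real.tendsto_log_atTop
  have rY := rs_ceil_ratio (1 / 2) 1 (by norm_num) (by norm_num)
  have rm := rs_ceil_ratio δ 1 hδ0 (by norm_num)
  have rn := rs_ceil_ratio (5 / 36) 1 (by norm_num) (by norm_num)
  simp only [one_mul] at rY rm rn
  have rp := rs_ceil_ratio (5 / 36) (1 / 3) (by norm_num) (by norm_num)
  have rU := rsU_tendsto CS _ _ rY rp
  have rs4 : Tendsto (fun X : ℝ => 5 / 9 / (Real.log (⌈X ^ ((5 : ℝ) / 36)⌉₊ : ℝ) / Real.log X)) atTop (𝓝 4) := by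
    have := (tendsto_const_nhds (x := (5 / 9 : ℝ))).div rn (by norm_num)
    have e : (5 / 9 : ℝ) / (5 / 36) = 4 := by norm_num
    rwa [e] at this
  have ra := (rsa_cont.tendsto 4).comp rs4
  have rA := (rsA_cont.tendsto 4).comp rs4
  rw [rsa_log (by norm_num) (by norm_num)] at ra
  have rr : Tendsto (fun X : ℝ => Real.log (⌈X ^ δ⌉₊ : ℝ) / Real.log X / δ) atTop (𝓝 1) := by
    have := rm.div_const δ
    rwa [div_self hδ0.ne'] at this
  have rΦ := ((ra.mul_const (9 / 5)).mul rr).sub ((rr.const_mul (1 + θ)).mul rU)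
  have hΦlim : γ / 2 + 4 * ε1 < Real.log (4 - 1) * (9 / 5) * 1 - (1 + θ) * 1 * rsKappa := by
    have e : (4 - 1 : ℝ) = 3 := by norm_num
    have e2 : γ = (9 / 5) * Real.log 3 - rsKappa := rfl
    rw [e]
    have : θ * rsKappa ≤ θ * (18 / 5) := mul_le_mul_of_nonneg_left hκ (by positivity)
    have e3 : θ * (18 / 5) = 0.225 * γ := by rw [hθ]; ring
    have e4 : 4 * ε1 = γ / 4 := by rw [hε1]; ring
    linarith
  have eΦ := rΦ.eventually_const_lt hΦlim
  have rAA := (rA.mul_const (9 / 5)).mul rr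
  have eAA := rAA.eventually_lt_const (show rsA 4 * (9 / 5) * 1 < CA - 1 by rw [hCA]; linarith)
  have eA3 : ∀ᶠ X : ℝ in atTop, rsA (3 + 36 / 5 * (Real.log X)⁻¹) ≤ 1 + θ := by
    have h3 : Tendsto (fun X : ℝ => 3 + 36 / 5 * (Real.log X)⁻¹) atTop (𝓝 3) := by
      have := (hinv.const_mul (36 / 5)).const_add 3
      simpa using this
    have := (rsA_cont.tendsto 3).comp h3
    rw [rsA_one (le_refl (3 : ℝ))] at this
    exact this.eventually_le_const (by have : 0 < θ := by positivity
                                       linarith)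
  have eY := rY.eventually_lt_const (show (1 / 2 : ℝ) < 19 / 36 by norm_num)
  have em := rm.eventually_lt_const (show δ < 2 * δ by linarith)
  have en := rn.eventually_lt_const (show (5 / 36 : ℝ) < 10 / 36 by norm_num)
  have eL := Real.tendsto_log_atTop.eventually_ge_atTop 100
  have emm := (tendsto_rpow_atTop hδ0).eventually_ge_atTop (m0 : ℝ)
  have ep : ∀ᶠ X : ℝ in atTop, 2 ≤ (1 / 3) * X ^ ((5 : ℝ) / 36) :=
    ((tendsto_rpow_atTop (by norm_num : (0 : ℝ) < 5 / 36)).const_mul_atTop (by norm_num)).eventually_ge_atTop 2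
  rw [← eventually_atTop (p := fun X : ℝ => c * γ / (8 * c0) / Real.log X ≤
              richertMainTerm (X ^ δ) (X ^ ((5 : ℝ) / 36)) (X ^ ((1 : ℝ) / 2))
                (X ^ ((5 : ℝ) / 9)) (X ^ ((1 : ℝ) / 1000)) ψ)]
  filter_upwards [eΦ, eAA, eA3, eY, em, en, eL, emm, ep, rs_sum_three, eventually_gt_atTop 1] with X
    eΦ eAA eA3 eY em en eL emm ep e3 hX
  have hX0 : 0 < X := by linarith
  simp only [Function.comp_apply] at eΦ eAA
  have hwz : X ^ δ ≤ X ^ ((5 : ℝ) / 36) := Real.rpow_le_rpow_of_exponent_le hX.le (by linarith)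
  have hw0 : 0 < X ^ δ := by positivity
  rw [rs_mainTerm_eq _ _ _ _ _ ψ hw0.le hwz]
  have ew : Real.log (X ^ δ) = δ * Real.log X := Real.log_rpow hX0 _
  have eD : Real.log (X ^ ((5 : ℝ) / 9)) = 5 / 9 * Real.log X := Real.log_rpow hX0 _
  have eE : Real.log (X ^ ((1 : ℝ) / 1000)) = 1 / 1000 * Real.log X := Real.log_rpow hX0 _
  have hE1 : 1 < X ^ ((1 : ℝ) / 1000) := Real.one_lt_rpow hX (by norm_num)
  have hD0 : 0 < X ^ ((5 : ℝ) / 9) := by positivity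
  have hmn : ⌈X ^ δ⌉₊ ≤ ⌈X ^ ((5 : ℝ) / 36)⌉₊ := Nat.ceil_mono hwz
  have hwm := Nat.le_ceil (X ^ δ)
  have hzn := Nat.le_ceil (X ^ ((5 : ℝ) / 36))
  set m := ⌈X ^ δ⌉₊ with hm
  set n := ⌈X ^ ((5 : ℝ) / 36)⌉₊ with hn
  set L := Real.log X with hL
  have hL0 : 0 < L := by linarith
  have hm0m : m0 ≤ m := by exact_mod_cast emm.trans hwm
  have hm2 : 2 ≤ m := hm0.trans hm0m
  have hmpos : (0 : ℝ) < m := by exact_mod_cast (by omega : 0 < m)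
  have hnpos : (0 : ℝ) < n := by exact_mod_cast (by omega : 0 < n)
  set l := Real.log (m : ℝ) with hl
  have hδl : δ * L ≤ l := by rw [← ew]; exact Real.log_le_log hw0 hwm
  have hl2 : l < 2 * δ * L := by rwa [div_lt_iff₀ hL0] at em
  have hl0 : 0 < l := lt_of_lt_of_le (by positivity) hδl
  have hδL : δ * L ≤ 1 / 60000 * L := by gcongr
  have hlog2 : Real.log 2 < 1 := by
    have := Real.log_two_lt_d9; linarith
  have hNl : L ≤ (⌈1 / δ⌉₊ : ℝ) * l := by
    have h2 : 1 / δ ≤ (⌈1 / δ⌉₊ : ℝ) := Nat.le_ceil _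
    calc L = 1 / δ * (δ * L) := by field_simp
      _ ≤ (⌈1 / δ⌉₊ : ℝ) * l := by gcongr
  -- linear sieve at level D
  have hmD : (m : ℝ) ≤ X ^ ((5 : ℝ) / 9) := by
    rw [← Real.log_le_log_iff hmpos hD0, eD]; linarith
  have hlD := hlin m hm0m n hmn (X ^ ((5 : ℝ) / 9)) hmD (by rw [eD]; linarith)
  have hnD : (n : ℝ) ^ 2 ≤ X ^ ((5 : ℝ) / 9) := by
    rw [← Real.log_le_log_iff (by positivity) hD0, eD, Real.log_pow]
    rw [div_lt_iff₀ hL0] at en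
    push_cast
    linarith
  obtain ⟨hΛp, hΛm⟩ := hlD
  replace hΛm := hΛm hnD
  have earg : Real.log (X ^ ((5 : ℝ) / 9)) / Real.log n = 5 / 9 / (Real.log n / L) := by
    rw [eD, div_div_eq_mul_div]
  rw [earg, eD] at hΛp hΛm
  set r := l / L / δ with hr
  have elr : l = r * δ * L := by rw [hr]; field_simp
  have efac : ∀ t : ℝ, t * l / (c0 * (5 / 9 * L)) = δ / c0 * (t * (9 / 5) * r) := by
    intro t; rw [elr]; field_simp
  have eεr : ε = δ / c0 * ε1 := by rw [hε]; ring
  rw [efac] at hΛp hΛm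
  -- subtracted sum
  have hYQ : Real.log (⌈X ^ ((1 : ℝ) / 2)⌉₊ : ℝ) < 5 / 9 * L - Real.log 2 := by
    rw [div_lt_iff₀ hL0] at eY
    linarith
  have hp02 : 2 ≤ ⌈(1 / 3) * X ^ ((5 : ℝ) / 36)⌉₊ := by
    exact_mod_cast ep.trans (Nat.le_ceil _)
  have hRp := rsW_pos 0 30 m (X ^ ((1 : ℝ) / 1000))
  have hT := rs_T_final c0 hc0 CS hCs ψ h01 h0 h1 X hX _ rfl hp02 m n hzn ε θ l
    (rsW 0 30 m true (X ^ ((1 : ℝ) / 1000))) hε0.le (by positivity) hl0.le hRp.le eA3 hYQ e3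
    (by
      intro D' hD' h2 h3
      refine (hlin m hm0m n hmn D' ?_ ?_).1
      · rw [← Real.log_le_log_iff hmpos hD']
        linarith
      · linarith)
  -- fundamental lemma
  have hV0 := rsV_pos 0 m
  have hb := rsW_bounds 0 30 m (X ^ ((1 : ℝ) / 1000))
  have hm30 : (m : ℝ) ^ 30 ≤ X ^ ((1 : ℝ) / 1000) := by
    rw [← Real.log_le_log_iff (by positivity) (by positivity), eE, Real.log_pow]
    push_cast
    linarith
  have hm29 : (m : ℝ) ^ 29 ≤ X ^ ((1 : ℝ) / 1000) := by
    refine le_trans (pow_le_pow_right₀ ?_ (by norm_num)) hm30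
    exact_mod_cast (by omega : 1 ≤ m)
  have hF1 := (hFL m _ hE1).1 hm29
  have hF2 := (hFL m _ hE1).2 hm30
  rw [eE] at hF1 hF2
  have hVl := (hV m hm2).1
  have hVinv : (rsV 0 m)⁻¹ ≤ l / c := by
    rw [inv_le_comm₀ hV0 (by positivity), inv_div]; exact hVl
  set V := rsV 0 m with hVd
  set x := 2000 * δ / c with hx
  have hx0 : 0 < x := by positivity
  have hx1 : x ≤ 1 := by rw [hx, div_le_one hc]; linarith
  have hvx : V⁻¹ / (1 / 1000 * L) ≤ x := by
    rw [div_le_iff₀ (by positivity)]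
    refine hVinv.trans ?_
    rw [div_le_iff₀ hc, hx]
    have : 2000 * δ / c * (1 / 1000 * L) * c = 2 * δ * L := by field_simp; norm_num
    rw [this]; exact hl2.le
  have herr : K * V⁻¹ ^ 9 / (1 / 1000 * L) ^ 10 ≤ V * (K * x) := by
    have e : K * V⁻¹ ^ 9 / (1 / 1000 * L) ^ 10 = V * (K * (V⁻¹ / (1 / 1000 * L)) ^ 10) := by
      field_simp
    rw [e]
    have : (V⁻¹ / (1 / 1000 * L)) ^ 10 ≤ x := by
      calc (V⁻¹ / (1 / 1000 * L)) ^ 10 ≤ x ^ 10 := by gcongr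
        _ ≤ x ^ 1 := pow_le_pow_of_le_one hx0.le hx1 (by norm_num)
        _ = x := pow_one x
    gcongr
  have hxK : 2 * (K * x) * CA ≤ γ / 4 := by
    rw [lt_div_iff₀ (by positivity)] at hδ3
    rw [hx]
    have : 2 * (K * (2000 * δ / c)) * CA = δ * (16000 * K * CA) / (4 * c) := by field_simp; norm_num
    rw [this, div_le_div_iff₀ (by positivity) (by norm_num)]
    nlinarith
  -- assembly
  set Λp := rsW m 2 n true (X ^ ((5 : ℝ) / 9)) with hΛpd
  set Λm := rsW m 2 n false (X ^ ((5 : ℝ) / 9)) with hΛmd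
  set Rp := rsW 0 30 m true (X ^ ((1 : ℝ) / 1000)) with hRpd
  set Rm := rsW 0 30 m false (X ^ ((1 : ℝ) / 1000)) with hRmd
  set U := rsU CS (Real.log (⌈X ^ ((1 : ℝ) / 2)⌉₊ : ℝ)) (Real.log (⌈(1 / 3) * X ^ ((5 : ℝ) / 36)⌉₊ : ℝ))
      (5 / 9 * L - Real.log 2) with hU
  set ρ := δ / c0 with hρ
  have hρ0 : 0 < ρ := by positivity
  have eS : (1 + θ) * l / c0 * U + 3 * ε = ρ * ((1 + θ) * r * (L * U) + 3 * ε1) := by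
    rw [eεr, elr, hρ]; field_simp
  rw [eS] at hT
  refine le_trans ?_ (sub_le_sub_left hT _)
  have hdiff : ρ * (γ / 2) ≤ Λm - ρ * ((1 + θ) * r * (L * U) + 3 * ε1) := by
    have := mul_le_mul_of_nonneg_left eΦ.le hρ0.le
    rw [eεr] at hΛm
    linarith
  have hΛpu : Λp ≤ ρ * CA := by
    have h2 := mul_le_mul_of_nonneg_left eAA.le hρ0.le
    have h3 : ρ * ε1 ≤ ρ * 1 := mul_le_mul_of_nonneg_left (by rw [hε1]; linarith) hρ0.le
    rw [eεr] at hΛp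
    linarith
  have hΛp0 : 0 < Λp := rsW_pos _ _ _ _
  have hRdiff : Rp - Rm ≤ V * (2 * (K * x)) := by linarith
  have hRdiff0 : 0 ≤ Rp - Rm := by linarith [hb.1, hb.2]
  have s1 : V * (ρ * (γ / 2)) ≤ Rp * (Λm - ρ * ((1 + θ) * r * (L * U) + 3 * ε1)) :=
    mul_le_mul hb.2 hdiff (by positivity) hRp.le
  have s2 : Λp * (Rp - Rm) ≤ ρ * CA * (V * (2 * (K * x))) :=
    mul_le_mul hΛpu hRdiff hRdiff0 (by positivity)
  have s3 : ρ * CA * (V * (2 * (K * x))) ≤ V * ρ * (γ / 4) := by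
    have := mul_le_mul_of_nonneg_left hxK (by positivity : 0 ≤ V * ρ)
    linarith
  have s4 : c * γ / (8 * c0) / L ≤ V * ρ * (γ / 4) := by
    have h2 : c / (2 * δ * L) ≤ V := by
      refine le_trans ?_ hVl
      gcongr
    calc c * γ / (8 * c0) / L = c / (2 * δ * L) * ρ * (γ / 4) := by rw [hρ]; field_simp; norm_num
      _ ≤ _ := by gcongr
  linarith
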